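/- Suppose every 5-edge-connected planar graph is Z_3-extendable at every vertex of degree 5. Then every 5-edge-connected graph with crossing number at most one is Z_3-connected. -/

import Mathlib

open Finset

/-- A finite multigraph without loops: each edge `e` has two distinct
endpoints `fst e` and `snd e`.  An orientation is a map `D : E → Bool`,
where `D e = true` means `e` is directed from `fst e` to `snd e`. -/
structure Multigraph (V : Type) (E : Type) where
  fst : E → V
  snd : E → V
  no_loop : ∀ e, fst e ≠ snd e

namespace Multigraph

variable {V E : Type} [Fintype V] [DecidableEq V] [Fintype E] [DecidableEq E]

/-- The tail (initial vertex) of edge `e` under orientation `D`. -/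
def tail (G : Multigraph V E) (D : E → Bool) (e : E) : V :=
  if D e then G.fst e else G.snd e

/-- The head (terminal vertex) of edge `e` under orientation `D`. -/
def head (G : Multigraph V E) (D : E → Bool) (e : E) : V :=
  if D e then G.snd e else G.fst e

/-- Outdegree `d⁺_D(v)` (as an integer, for convenience). -/
def outDeg (G : Multigraph V E) (D : E → Bool) (v : V) : ℤ :=
  ((univ.filter fun e => G.tail D e = v).card : ℤ)

/-- Indegree `d⁻_D(v)`. -/
def inDeg (G : Multigraph V E) (D : E → Bool) (v : V) : ℤ :=
  ((univ.filter fun e => G.head D e = v).card : ℤ)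

/-- `e` is incident with `v`. -/
def Incident (G : Multigraph V E) (v : V) (e : E) : Prop :=
  G.fst e = v ∨ G.snd e = v

instance (G : Multigraph V E) (v : V) : DecidablePred (G.Incident v) := fun e =>
  inferInstanceAs (Decidable (G.fst e = v ∨ G.snd e = v))

/-- The degree of a vertex. -/
def degree (G : Multigraph V E) (v : V) : ℕ :=
  (univ.filter fun e => G.Incident v e).card

/-- The edge-cut `∂_G(A)`: edges with exactly one endpoint in `A`. -/
def cut (G : Multigraph V E) (A : Finset V) : Finset E :=
  univ.filter fun e => ¬ ((G.fst e ∈ A) ↔ (G.snd e ∈ A))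

/-- `G` is `k`-edge-connected: every edge-cut has at least `k` edges. -/
def EdgeConnected (G : Multigraph V E) (k : ℕ) : Prop :=
  ∀ A : Finset V, A.Nonempty → A ≠ univ → k ≤ (G.cut A).card

/-- A boundary function: values in `ℤ₃` summing to `0`. -/
def IsBoundary (β : V → ZMod 3) : Prop := ∑ v, β v = 0

/-- `D` is a `β`-orientation: `d⁺(v) - d⁻(v) ≡ β v (mod 3)` at every vertex. -/
def IsBetaOrientation (G : Multigraph V E) (β : V → ZMod 3) (D : E → Bool) : Prop :=
  ∀ v : V, ((G.outDeg D v - G.inDeg D v : ℤ) : ZMod 3) = β v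

/-- A mod 3-orientation: `d⁺(v) ≡ d⁻(v) (mod 3)` at every vertex. -/
def IsMod3Orientation (G : Multigraph V E) (D : E → Bool) : Prop :=
  ∀ v : V, ((G.outDeg D v - G.inDeg D v : ℤ) : ZMod 3) = 0

/-- `G` admits a mod 3-orientation (equivalently, a nowhere-zero 3-flow). -/
def Mod3Orientable (G : Multigraph V E) : Prop := ∃ D, G.IsMod3Orientation D

/-- `G` is `ℤ₃`-connected. -/
def Z3Connected (G : Multigraph V E) : Prop :=
  ∀ β : V → ZMod 3, IsBoundary β → ∃ D, G.IsBetaOrientation β D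

/-- `G` is `ℤ₃`-extendable at `x`: every pre-orientation of the edges at `x`
compatible with `β x` extends to a `β`-orientation of `G`. -/
def Z3ExtendableAt (G : Multigraph V E) (x : V) : Prop :=
  ∀ β : V → ZMod 3, IsBoundary β →
    ∀ D₀ : E → Bool, ((G.outDeg D₀ x - G.inDeg D₀ x : ℤ) : ZMod 3) = β x →
      ∃ D : E → Bool, (∀ e, G.Incident x e → D e = D₀ e) ∧ G.IsBetaOrientation β D

/-- `G` is mod-3-extendable at `x`: every pre-orientation of `∂(x)` with
`d⁺(x) ≡ d⁻(x) (mod 3)` extends to a mod 3-orientation of `G`. -/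
def Mod3ExtendableAt (G : Multigraph V E) (x : V) : Prop :=
  ∀ D₀ : E → Bool, ((G.outDeg D₀ x - G.inDeg D₀ x : ℤ) : ZMod 3) = 0 →
    ∃ D : E → Bool, (∀ e, G.Incident x e → D e = D₀ e) ∧ G.IsMod3Orientation D

/-- `A` is a `k`-critical-set: `d(A) ≤ k` but every nonempty proper subset has
larger boundary. -/
def CriticalSet (G : Multigraph V E) (k : ℕ) (A : Finset V) : Prop :=
  A.Nonempty ∧ A ≠ univ ∧ (G.cut A).card ≤ k ∧
    ∀ B : Finset V, B.Nonempty → B ⊂ A → k < (G.cut B).card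

/-- The set of edge-cuts of size exactly `k` (as sets of edges). -/
def kCuts (G : Multigraph V E) (k : ℕ) : Finset (Finset E) :=
  ((univ : Finset (Finset V)).filter
    fun A => A.Nonempty ∧ A ≠ univ ∧ (G.cut A).card = k).image G.cut


/-- A drawing of `G` in the plane: an injective placement of the vertices and,
for each edge, an injective continuous arc joining the positions of its
endpoints, such that no vertex position lies in the interior of any arc. -/
structure Drawing {V E : Type} (G : Multigraph V E) where
  vpos : V → ℝ × ℝ
  arc : E → ℝ → ℝ × ℝ
  arc_continuous : ∀ e, ContinuousOn (arc e) (Set.Icc 0 1)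
  arc_injOn : ∀ e, Set.InjOn (arc e) (Set.Icc 0 1)
  arc_zero : ∀ e, arc e 0 = vpos (G.fst e)
  arc_one : ∀ e, arc e 1 = vpos (G.snd e)
  vpos_injective : Function.Injective vpos
  vertex_not_interior : ∀ e v, vpos v ∉ arc e '' Set.Ioo 0 1

/-- The crossing pairs of a drawing: ordered pairs of distinct edges whose open
arcs (interiors) intersect. -/
def Drawing.crossings {V E : Type} {G : Multigraph V E} (d : Drawing G) :
    Set (E × E) :=
  {p | p.1 ≠ p.2 ∧ (d.arc p.1 '' Set.Ioo 0 1 ∩ d.arc p.2 '' Set.Ioo 0 1).Nonempty}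

/-- `G` is planar: it has a drawing with no crossings. -/
def Planar {V E : Type} (G : Multigraph V E) : Prop :=
  ∃ d : Drawing G, d.crossings = ∅

/-- `G` has crossing number at most one: it has a drawing with at most one
crossing pair of edges. -/
def CrossingNumberLE1 {V E : Type} (G : Multigraph V E) : Prop :=
  ∃ d : Drawing G, ∀ p ∈ d.crossings, ∀ q ∈ d.crossings, p = q ∨ p = q.swap

/-! ### Arcs in the complex plane, as sets -/

/-- `A` is a simple arc in the plane joining `a` and `b`. -/
def IsArc (A : Set ℂ) (a b : ℂ) : Prop :=
  ∃ γ : ℝ → ℂ, ContinuousOn γ (Set.Icc 0 1) ∧ Set.InjOn γ (Set.Icc 0 1) ∧ γ 0 = a ∧ γ 1 = b ∧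
    γ '' Set.Icc 0 1 = A

theorem IsArc.sub {γ : ℝ → ℂ} (hc : ContinuousOn γ (Set.Icc 0 1))
    (hi : Set.InjOn γ (Set.Icc 0 1)) {s t : ℝ} (hs : 0 ≤ s) (hst : s < t) (ht : t ≤ 1) :
    IsArc (γ '' Set.Icc s t) (γ s) (γ t) := by
  have hmem : ∀ u ∈ Set.Icc (0:ℝ) 1, s + u * (t - s) ∈ Set.Icc s t := by
    rintro u ⟨h0, h1⟩
    constructor
    · nlinarith
    · nlinarith
  have hsub : Set.Icc s t ⊆ Set.Icc 0 1 := Set.Icc_subset_Icc hs ht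
  refine ⟨fun u => γ (s + u * (t - s)), ?_, ?_, ?_, ?_, ?_⟩
  · exact hc.comp (by fun_prop) (fun u hu => hsub (hmem u hu))
  · intro u hu v hv h
    have := hi (hsub (hmem u hu)) (hsub (hmem v hv)) h
    have h2 : (u - v) * (t - s) = 0 := by linarith
    rcases mul_eq_zero.1 h2 with h3 | h3 <;> linarith
  · simp
  · simp
  · ext z
    constructor
    · rintro ⟨u, hu, rfl⟩
      exact ⟨_, hmem u hu, rfl⟩
    · rintro ⟨v, hv, rfl⟩
      have hts : 0 < t - s := by linarith
      refine ⟨(v - s) / (t - s), ⟨div_nonneg (by linarith [hv.1]) hts.le, ?_⟩, ?_⟩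
      · rw [div_le_one hts]; linarith [hv.2]
      · simp only
        congr 1
        field_simp
        ring

theorem IsArc.symm {A : Set ℂ} {a b : ℂ} (h : IsArc A a b) : IsArc A b a := by
  obtain ⟨γ, hc, hi, h0, h1, hA⟩ := h
  have hmem : ∀ u ∈ Set.Icc (0:ℝ) 1, 1 - u ∈ Set.Icc (0:ℝ) 1 := by
    rintro u ⟨h0, h1⟩
    constructor <;> linarith
  refine ⟨fun u => γ (1 - u), hc.comp (by fun_prop) hmem, ?_, by simpa, by simpa, ?_⟩
  · intro u hu v hv h
    have := hi (hmem u hu) (hmem v hv) h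
    linarith
  · rw [← hA]
    ext z
    constructor
    · rintro ⟨u, hu, rfl⟩
      exact ⟨_, hmem u hu, rfl⟩
    · rintro ⟨u, hu, rfl⟩
      exact ⟨1 - u, hmem u hu, by simp⟩

theorem IsArc.left_mem {A : Set ℂ} {a b : ℂ} (h : IsArc A a b) : a ∈ A := by
  obtain ⟨γ, hc, hi, h0, h1, rfl⟩ := h
  exact ⟨0, by simp, h0⟩

theorem IsArc.right_mem {A : Set ℂ} {a b : ℂ} (h : IsArc A a b) : b ∈ A := h.symm.left_mem

theorem IsArc.isCompact {A : Set ℂ} {a b : ℂ} (h : IsArc A a b) : IsCompact A := by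
  obtain ⟨γ, hc, hi, h0, h1, rfl⟩ := h
  exact isCompact_Icc.image_of_continuousOn hc

theorem IsArc.isPreconnected {A : Set ℂ} {a b : ℂ} (h : IsArc A a b) : IsPreconnected A := by
  obtain ⟨γ, hc, hi, h0, h1, rfl⟩ := h
  exact isPreconnected_Icc.image _ hc

theorem IsArc.ne {A : Set ℂ} {a b : ℂ} (h : IsArc A a b) : a ≠ b := by
  obtain ⟨γ, hc, hi, h0, h1, rfl⟩ := h
  rintro rfl
  have := hi (x₁ := 0) (x₂ := 1) (by simp) (by simp) (by rw [h0, h1])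
  norm_num at this

theorem isArc_segment {a b : ℂ} (h : a ≠ b) : IsArc (segment ℝ a b) a b := by
  refine ⟨fun t => AffineMap.lineMap a b t, ?_, ?_, by simp, by simp, ?_⟩
  · exact (AffineMap.lineMap_continuous).continuousOn
  · exact (AffineMap.lineMap_injective ℝ h).injOn
  · rw [segment_eq_image_lineMap]

theorem IsArc.trans {A B : Set ℂ} {a b c : ℂ} (hA : IsArc A a b) (hB : IsArc B b c)
    (hAB : A ∩ B ⊆ {b}) : IsArc (A ∪ B) a c := by
  obtain ⟨γ, hc, hi, h0, h1, rfl⟩ := hA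
  obtain ⟨δ, hc', hi', h0', h1', rfl⟩ := hB
  have m1 : ∀ t ∈ Set.Icc (0:ℝ) 1, t ≤ 1/2 → 2 * t ∈ Set.Icc (0:ℝ) 1 := by
    rintro t ⟨h, h'⟩ h''; constructor <;> linarith
  have m2 : ∀ t ∈ Set.Icc (0:ℝ) 1, 1/2 ≤ t → 2 * t - 1 ∈ Set.Icc (0:ℝ) 1 := by
    rintro t ⟨h, h'⟩ h''; constructor <;> linarith
  have key : ∀ s ∈ Set.Icc (0:ℝ) 1, ∀ t ∈ Set.Icc (0:ℝ) 1, γ s = δ t → s = 1 ∧ t = 0 := by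
    intro s hs t ht h
    have hb : γ s = b := hAB ⟨⟨s, hs, rfl⟩, ⟨t, ht, h.symm⟩⟩
    refine ⟨hi hs (by simp) (by rw [hb, h1]), hi' ht (by simp) (by rw [← h, hb, h0'])⟩
  refine ⟨fun t => if t ≤ 1/2 then γ (2 * t) else δ (2 * t - 1), ?_, ?_, ?_, ?_, ?_⟩
  · have e : Set.Icc (0:ℝ) 1 = Set.Icc 0 (1/2) ∪ Set.Icc (1/2) 1 := by
      rw [Set.Icc_union_Icc_eq_Icc] <;> norm_num
    rw [e]
    apply ContinuousOn.union_of_isClosed _ _ isClosed_Icc isClosed_Icc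
    · refine ContinuousOn.congr (f := fun t => γ (2 * t)) ?_ ?_
      · exact hc.comp (by fun_prop) (fun t ht => m1 t ⟨ht.1, by linarith [ht.2]⟩ ht.2)
      · intro t ht
        simp only
        rw [if_pos ht.2]
    · refine ContinuousOn.congr (f := fun t => δ (2 * t - 1)) ?_ ?_
      · exact hc'.comp (by fun_prop) (fun t ht => m2 t ⟨by linarith [ht.1], ht.2⟩ ht.1)
      · intro t ht
        simp only
        split_ifs with h
        · have : t = 1/2 := le_antisymm h ht.1
          subst this
          norm_num
          rw [h1, h0']
        · rfl
  · intro s hs t ht h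
    simp only at h
    split_ifs at h with h1 h2 h2
    · have := hi (m1 s hs h1) (m1 t ht h2) h
      linarith
    · have := key _ (m1 s hs h1) _ (m2 t ht (le_of_not_ge h2)) h
      linarith [this.1, this.2]
    · have := key _ (m1 t ht h2) _ (m2 s hs (le_of_not_ge h1)) h.symm
      linarith [this.1, this.2]
    · have := hi' (m2 s hs (le_of_not_ge h1)) (m2 t ht (le_of_not_ge h2)) h
      linarith
  · simp [h0]
  · norm_num
    exact h1'
  · ext z
    constructor
    · rintro ⟨t, ht, rfl⟩
      simp only
      split_ifs with h
      · exact Or.inl ⟨_, m1 t ht h, rfl⟩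
      · exact Or.inr ⟨_, m2 t ht (le_of_not_ge h), rfl⟩
    · rintro (⟨t, ht, rfl⟩ | ⟨t, ht, rfl⟩)
      · refine ⟨t / 2, ⟨by linarith [ht.1], by linarith [ht.2]⟩, ?_⟩
        simp only
        rw [if_pos (by linarith [ht.2])]
        congr 1; ring
      · refine ⟨(t + 1) / 2, ⟨by linarith [ht.1], by linarith [ht.2]⟩, ?_⟩
        simp only
        split_ifs with h
        · have : t = 0 := by linarith [ht.1]
          subst this
          norm_num
          rw [h1, h0']
        · congr 1; ring

/-- Splitting an arc at an interior point. -/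
theorem IsArc.split {A : Set ℂ} {a b c : ℂ} (h : IsArc A a b) (hc : c ∈ A) (ha : c ≠ a)
    (hb : c ≠ b) : ∃ B C : Set ℂ, IsArc B a c ∧ IsArc C c b ∧ B ⊆ A ∧ C ⊆ A ∧ B ∩ C ⊆ {c} ∧
      b ∉ B ∧ a ∉ C := by
  obtain ⟨γ, hco, hi, rfl, rfl, rfl⟩ := h
  obtain ⟨t, ht, rfl⟩ := hc
  have h0 : 0 < t := lt_of_le_of_ne ht.1 (by rintro rfl; exact ha rfl)
  have h1 : t < 1 := lt_of_le_of_ne ht.2 (by rintro rfl; exact hb rfl)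
  have s1 : Set.Icc 0 t ⊆ Set.Icc (0:ℝ) 1 := Set.Icc_subset_Icc le_rfl h1.le
  have s2 : Set.Icc t 1 ⊆ Set.Icc (0:ℝ) 1 := Set.Icc_subset_Icc h0.le le_rfl
  refine ⟨γ '' Set.Icc 0 t, γ '' Set.Icc t 1, IsArc.sub hco hi le_rfl h0 h1.le,
    IsArc.sub hco hi h0.le h1 le_rfl, Set.image_mono s1, Set.image_mono s2, ?_, ?_, ?_⟩
  · rintro _ ⟨⟨u, hu, rfl⟩, ⟨v, hv, hvu⟩⟩
    have := hi (s2 hv) (s1 hu) hvu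
    have : u = t := le_antisymm hu.2 (this ▸ hv.1)
    simp [this]
  · rintro ⟨u, hu, h⟩
    have := hi (s1 hu) (by simp) h
    linarith [hu.2]
  · rintro ⟨u, hu, h⟩
    have := hi (s2 hu) (by simp) h
    linarith [hu.1]

/-- The last exit of an arc from a closed set. -/
theorem IsArc.exit {A K : Set ℂ} {a b : ℂ} (h : IsArc A a b) (hK : IsClosed K)
    (hne : (A ∩ K).Nonempty) (hb : b ∉ K) :
    ∃ (c : ℂ) (B : Set ℂ), c ∈ A ∧ c ∈ K ∧ IsArc B c b ∧ B ⊆ A ∧ (∀ z ∈ B, z ∈ K → z = c) ∧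
      c ∉ interior K ∧ (c ≠ a → a ∉ B) := by
  obtain ⟨γ, hc, hi, rfl, rfl, rfl⟩ := h
  have hcl : IsCompact (Set.Icc (0:ℝ) 1 ∩ γ ⁻¹' K) :=
    isCompact_Icc.of_isClosed_subset (hc.preimage_isClosed_of_isClosed isClosed_Icc hK)
      Set.inter_subset_left
  have hn : (Set.Icc (0:ℝ) 1 ∩ γ ⁻¹' K).Nonempty := by
    obtain ⟨_, ⟨t, ht, rfl⟩, hk⟩ := hne
    exact ⟨t, ht, hk⟩
  obtain ⟨t, ⟨ht, htK⟩, hmax⟩ := hcl.exists_isGreatest hn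
  have h1 : t < 1 := lt_of_le_of_ne ht.2 (by rintro rfl; exact hb htK)
  have s2 : Set.Icc t 1 ⊆ Set.Icc (0:ℝ) 1 := Set.Icc_subset_Icc ht.1 le_rfl
  refine ⟨γ t, γ '' Set.Icc t 1, ⟨t, ht, rfl⟩, htK, IsArc.sub hc hi ht.1 h1 le_rfl,
    Set.image_mono s2, ?_, ?_, ?_⟩
  · rintro _ ⟨u, hu, rfl⟩ hz
    have := hmax ⟨s2 hu, hz⟩
    rw [le_antisymm this hu.1]
  · intro hinter
    have hcw : ContinuousWithinAt γ (Set.Icc t 1) t := (hc t ht).mono s2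
    have hev : ∀ᶠ u in nhdsWithin t (Set.Icc t 1), γ u ∈ K :=
      hcw (mem_interior_iff_mem_nhds.1 hinter)
    have hev2 : ∀ᶠ u in nhdsWithin t (Set.Ioc t 1), γ u ∈ K :=
      nhdsWithin_mono t Set.Ioc_subset_Icc_self hev
    have hb : (nhdsWithin t (Set.Ioc t 1)).NeBot := by
      rw [nhdsWithin_Ioc_eq_nhdsGT h1]; infer_instance
    obtain ⟨u, hu, hu'⟩ := (hev2.and self_mem_nhdsWithin).exists
    have := hmax ⟨s2 ⟨hu'.1.le, hu'.2⟩, hu⟩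
    linarith [hu'.1]
  · rintro hca ⟨u, hu, h⟩
    have := hi (s2 hu) (by simp) h
    have h0 : t = 0 := le_antisymm (by linarith [hu.1]) ht.1
    exact hca (by rw [h0])

/-- The sub-arc from `a` to a point `w`, strictly before first hitting a closed set `K`, with `w`
as close as we like to the hitting point. -/
theorem IsArc.approach {A K : Set ℂ} {a b : ℂ} (h : IsArc A a b) (hK : IsClosed K)
    (ha : a ∉ K) (hb : b ∈ K) :
    ∃ c ∈ A, c ∈ K ∧ c ∉ interior K ∧ ∀ ε > 0, ∃ (w : ℂ) (B : Set ℂ), w ∈ B ∧ a ∈ B ∧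
      IsPreconnected B ∧ B ⊆ A ∧ Disjoint B K ∧ dist w c < ε := by
  obtain ⟨c, B, hcA, hcK, hB, hBA, hBK, hinter, -⟩ :=
    h.symm.exit hK ⟨b, h.right_mem, hb⟩ ha
  refine ⟨c, hcA, hcK, hinter, ?_⟩
  intro ε hε
  obtain ⟨γ, hc, hi, rfl, rfl, rfl⟩ := hB.symm
  have hcw : ContinuousWithinAt γ (Set.Icc 0 1) 1 := hc 1 (by simp)
  have hev : ∀ᶠ u in nhdsWithin (1:ℝ) (Set.Icc 0 1), dist (γ u) (γ 1) < ε :=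
    hcw (Metric.ball_mem_nhds _ hε)
  have hev2 : ∀ᶠ u in nhdsWithin (1:ℝ) (Set.Ico 0 1), dist (γ u) (γ 1) < ε :=
    nhdsWithin_mono _ Set.Ico_subset_Icc_self hev
  have hb : (nhdsWithin (1:ℝ) (Set.Ico 0 1)).NeBot := by
    rw [nhdsWithin_Ico_eq_nhdsLT zero_lt_one]; infer_instance
  obtain ⟨u, hu, hu'⟩ := (hev2.and self_mem_nhdsWithin).exists
  have s1 : Set.Icc 0 u ⊆ Set.Icc (0:ℝ) 1 := Set.Icc_subset_Icc le_rfl hu'.2.le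
  refine ⟨γ u, γ '' Set.Icc 0 u, ⟨u, ⟨hu'.1, le_rfl⟩, rfl⟩, ⟨0, ⟨le_rfl, hu'.1⟩, rfl⟩,
    isPreconnected_Icc.image _ (hc.mono s1), (Set.image_mono s1).trans hBA, ?_, hu⟩
  rw [Set.disjoint_left]
  rintro _ ⟨v, hv, rfl⟩ hvK
  have := hBK _ ⟨v, s1 hv, rfl⟩ hvK
  have := hi (s1 hv) (by simp) this
  linarith [hv.2, hu'.2]

/-- Two chords of a disc from a common point `x` to distinct boundary points meet only in `x`. -/
theorem chord_inter {w x c c' z : ℂ} {r : ℝ} (hx : x ∈ Metric.closedBall w r)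
    (hc : dist c w = r) (hc' : dist c' w = r) (hne : c ≠ c')
    (hz : z ∈ segment ℝ x c) (hz' : z ∈ segment ℝ x c') : z = x := by
  by_contra hzx
  have hr : r ≠ 0 := by
    rintro rfl
    rw [dist_eq_zero] at hc hc'
    exact hne (hc.trans hc'.symm)
  have aux : ∀ c c' : ℂ, dist c w = r → dist c' w = r → c ≠ c' → ∀ s t : ℝ, 0 < s → s ≤ 1 →
      0 < t → t ≤ s → AffineMap.lineMap x c s = z → AffineMap.lineMap x c' t = z → False := by
    intro c c' hc hc' hne s t hs hs1 ht hts h1 h2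
    have hcc : x + s * (c - x) = x + t * (c' - x) := by
      rw [← h2] at h1
      simp only [AffineMap.lineMap_apply, vsub_eq_sub, vadd_eq_add, Complex.real_smul] at h1
      linear_combination h1
    have hsne : (s : ℂ) ≠ 0 := by exact_mod_cast hs.ne'
    have e : c = x + ((t / s : ℝ) : ℂ) * (c' - x) := by
      push_cast
      field_simp
      linear_combination hcc
    have hxc' : x ≠ c' := by
      rintro rfl
      apply hzx
      rw [← h2]
      simp
    rcases hts.eq_or_lt with rfl | hlt
    · apply hne
      rw [e, div_self hs.ne']
      simp
    · have hop : c ∈ openSegment ℝ x c' := by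
        rw [openSegment_eq_image_lineMap]
        refine ⟨t / s, ⟨by positivity, by rw [div_lt_one hs]; exact hlt⟩, ?_⟩
        rw [e]
        simp only [AffineMap.lineMap_apply, vsub_eq_sub, vadd_eq_add, Complex.real_smul]
        ring
      have := (strictConvex_closedBall ℝ w r).openSegment_subset hx
        (Metric.mem_closedBall.2 hc'.le) hxc' hop
      rw [interior_closedBall w hr, Metric.mem_ball] at this
      linarith
  rw [segment_eq_image_lineMap] at hz hz'
  obtain ⟨s, hs, hs'⟩ := hz
  obtain ⟨t, ht, ht'⟩ := hz'
  have hs0 : 0 < s := lt_of_le_of_ne hs.1 (by rintro rfl; apply hzx; simpa using hs'.symm)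
  have ht0 : 0 < t := lt_of_le_of_ne ht.1 (by rintro rfl; apply hzx; simpa using ht'.symm)
  rcases le_total t s with h | h
  · exact aux c c' hc hc' hne s t hs0 hs.2 ht0 h hs' ht'
  · exact aux c' c hc' hc hne.symm t s ht0 ht.2 hs0 h ht' hs'

/-- A plane drawing in terms of arcs as subsets of `ℂ`. -/
structure SDraw {W F : Type} (H : Multigraph W F) where
  pos : W → ℂ
  A : F → Set ℂ
  inj : Function.Injective pos
  arc : ∀ e, IsArc (A e) (pos (H.fst e)) (pos (H.snd e))
  vert : ∀ e v, pos v ∈ A e → H.fst e = v ∨ H.snd e = v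
  disj : ∀ e e', e ≠ e' → ∀ z ∈ A e, z ∈ A e' → z ∈ Set.range pos

open Classical in
/-- The end of `e` other than `p`. -/
noncomputable def oth {W F : Type} (H : Multigraph W F) (p : W) (e : F) : W :=
  if H.fst e = p then H.snd e else H.fst e

theorem oth_ne {W F : Type} (H : Multigraph W F) (p : W) (e : F) : H.oth p e ≠ p := by
  unfold oth
  split_ifs with h
  · rw [← h]; exact (H.no_loop e).symm
  · exact h

theorem oth_arc {W F : Type} (H : Multigraph W F) {p : W} {e : F} (he : H.Incident p e)
    (pos : W → ℂ) (A : Set ℂ) :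
    IsArc A (pos (H.fst e)) (pos (H.snd e)) ↔ IsArc A (pos p) (pos (H.oth p e)) := by
  unfold oth
  split_ifs with h
  · rw [h]
  · rcases he with h' | h'
    · exact absurd h' h
    · rw [h']
      exact ⟨IsArc.symm, IsArc.symm⟩

theorem oth_incident {W F : Type} (H : Multigraph W F) {p : W} {e : F} (he : H.Incident p e)
    (v : W) : (H.fst e = v ∨ H.snd e = v) ↔ (p = v ∨ H.oth p e = v) := by
  unfold oth
  split_ifs with h
  · rw [h]
  · rcases he with h' | h'
    · exact absurd h' h
    · rw [h']
      exact or_comm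

/-- The outer parts of the edges at `p` with respect to a disc around `p`. -/
theorem SDraw.legs {W F : Type} {H : Multigraph W F} (d : SDraw H) (p : W) (w : ℂ) (r : ℝ)
    (hp : dist (d.pos p) w < r) :
    ∃ (c : F → ℂ) (B : F → Set ℂ), ∀ g, H.Incident p g →
      d.pos (H.oth p g) ∉ Metric.closedBall w r →
      c g ∈ d.A g ∧ dist (c g) w = r ∧ IsArc (B g) (c g) (d.pos (H.oth p g)) ∧ B g ⊆ d.A g ∧
        (∀ z ∈ B g, z ∈ Metric.closedBall w r → z = c g) := by
  have : ∀ g, ∃ (c : ℂ) (B : Set ℂ), H.Incident p g →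
      d.pos (H.oth p g) ∉ Metric.closedBall w r →
      c ∈ d.A g ∧ dist c w = r ∧ IsArc B c (d.pos (H.oth p g)) ∧ B ⊆ d.A g ∧
        (∀ z ∈ B, z ∈ Metric.closedBall w r → z = c) := by
    intro g
    by_cases hg : H.Incident p g ∧ d.pos (H.oth p g) ∉ Metric.closedBall w r
    · have harc := (H.oth_arc hg.1 d.pos (d.A g)).1 (d.arc g)
      obtain ⟨c, B, h1, h2, h3, h4, h5, h6, -⟩ := harc.exit (Metric.isClosed_closedBall)
        ⟨d.pos p, harc.left_mem, Metric.mem_closedBall.2 hp.le⟩ hg.2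
      refine ⟨c, B, fun _ _ => ⟨h1, ?_, h3, h4, h5⟩⟩
      refine le_antisymm h2 (not_lt.1 fun hlt => h6 ?_)
      exact Metric.ball_subset_interior_closedBall (Metric.mem_ball.2 hlt)
    · exact ⟨0, ∅, fun h1 h2 => absurd ⟨h1, h2⟩ hg⟩
  choose c B h using this
  exact ⟨c, B, h⟩

open Classical in
/-- Moving a vertex inside a disc that meets only the edges at that vertex. -/
theorem SDraw.move {W F : Type} {H : Multigraph W F} (d : SDraw H) (p : W) (w : ℂ) (r : ℝ)
    (hp : dist (d.pos p) w < r) (hv : ∀ v, v ≠ p → d.pos v ∉ Metric.closedBall w r)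
    (hA : ∀ g, ¬ H.Incident p g → Disjoint (d.A g) (Metric.closedBall w r))
    (x : ℂ) (hx : x ∈ Metric.closedBall w r) :
    ∃ d' : SDraw H, d'.pos = Function.update d.pos p x ∧
      (∀ g, ¬ H.Incident p g → d'.A g = d.A g) ∧
      (∀ g, d'.A g ⊆ d.A g ∪ Metric.closedBall w r) := by
  obtain ⟨c, B, hcB⟩ := d.legs p w r hp
  replace hcB := fun g hg => hcB g hg (hv _ (H.oth_ne p g))
  set K := Metric.closedBall w r with hK
  let A' : F → Set ℂ := fun g => if H.Incident p g then segment ℝ x (c g) ∪ B g else d.A g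
  have hAi : ∀ g, H.Incident p g → A' g = segment ℝ x (c g) ∪ B g := fun g hg => if_pos hg
  have hAn : ∀ g, ¬ H.Incident p g → A' g = d.A g := fun g hg => if_neg hg
  have hcK : ∀ g, H.Incident p g → c g ∈ K := fun g hg =>
    Metric.mem_closedBall.2 (hcB g hg).2.1.le
  have hseg : ∀ g, H.Incident p g → segment ℝ x (c g) ⊆ K := fun g hg =>
    (convex_closedBall w r).segment_subset hx (hcK g hg)
  -- points of the new arcs in and outside of the disc
  have hin : ∀ g z, z ∈ A' g → z ∈ K → H.Incident p g ∧ z ∈ segment ℝ x (c g) := by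
    intro g z hz hzK
    by_cases hg : H.Incident p g
    · refine ⟨hg, ?_⟩
      rw [hAi g hg] at hz
      rcases hz with hz | hz
      · exact hz
      · rw [(hcB g hg).2.2.2.2 z hz hzK]
        exact right_mem_segment ℝ x (c g)
    · rw [hAn g hg] at hz
      exact absurd hzK (Set.disjoint_left.1 (hA g hg) hz)
  have hout : ∀ g z, z ∈ A' g → z ∉ K → z ∈ d.A g := by
    intro g z hz hzK
    by_cases hg : H.Incident p g
    · rw [hAi g hg] at hz
      rcases hz with hz | hz
      · exact absurd (hseg g hg hz) hzK
      · exact (hcB g hg).2.2.2.1 hz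
    · rwa [hAn g hg] at hz
  have hpK : d.pos p ∈ K := Metric.mem_closedBall.2 hp.le
  have hpos : ∀ v, v ≠ p → Function.update d.pos p x v = d.pos v := fun v hvp =>
    Function.update_of_ne hvp _ _
  have hrange : ∀ z, z ∈ Set.range d.pos → z ∉ K → z ∈ Set.range (Function.update d.pos p x) := by
    rintro _ ⟨v, rfl⟩ hz
    have hvp : v ≠ p := by rintro rfl; exact hz hpK
    exact ⟨v, hpos v hvp⟩
  refine ⟨⟨Function.update d.pos p x, A', ?_, ?_, ?_, ?_⟩, rfl, hAn, ?_⟩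
  · intro u v huv
    by_cases hu : u = p <;> by_cases hv' : v = p
    · rw [hu, hv']
    · subst hu
      rw [Function.update_self, hpos v hv'] at huv
      exact absurd (huv ▸ hx) (hv v hv')
    · subst hv'
      rw [Function.update_self, hpos u hu] at huv
      exact absurd (huv ▸ hx) (hv u hu)
    · rw [hpos u hu, hpos v hv'] at huv
      exact d.inj huv
  · intro g
    by_cases hg : H.Incident p g
    · rw [H.oth_arc hg, Function.update_self, hpos _ (H.oth_ne p g), hAi g hg]
      obtain ⟨h1, h2, h3, h4, h5⟩ := hcB g hg
      by_cases hxc : x = c g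
      · rw [← hxc] at h3 ⊢
        rw [segment_same, Set.union_eq_self_of_subset_left (by simpa using h3.left_mem)]
        exact h3
      · exact (isArc_segment hxc).trans h3 (fun z hz => h5 z hz.2 (hseg g hg hz.1))
    · rw [hAn g hg]
      have h1 : H.fst g ≠ p := fun h => hg (Or.inl h)
      have h2 : H.snd g ≠ p := fun h => hg (Or.inr h)
      rw [hpos _ h1, hpos _ h2]
      exact d.arc g
  · intro g v hvg
    by_cases hvp : v = p
    · subst hvp
      rw [Function.update_self] at hvg
      exact (hin g x hvg hx).1
    · rw [hpos v hvp] at hvg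
      exact d.vert g v (hout g _ hvg (hv v hvp))
  · intro g g' hgg z hz hz'
    by_cases hzK : z ∈ K
    · obtain ⟨hi, hs⟩ := hin g z hz hzK
      obtain ⟨hi', hs'⟩ := hin g' z hz' hzK
      have hcc : c g ≠ c g' := by
        intro h
        obtain ⟨v, hvc⟩ := d.disj g g' hgg (c g) (hcB g hi).1 (h ▸ (hcB g' hi').1)
        by_cases hvp : v = p
        · subst hvp
          have := (hcB g hi).2.1
          rw [← hvc] at this
          linarith
        · exact hv v hvp (hvc ▸ hcK g hi)
      refine ⟨p, ?_⟩
      rw [Function.update_self]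
      exact (chord_inter hx (hcB g hi).2.1 (hcB g' hi').2.1 hcc hs hs').symm
    · exact hrange z (d.disj g g' hgg z (hout g z hz hzK) (hout g' z hz' hzK)) hzK
  · intro g z hz
    by_cases hzK : z ∈ K
    · exact Or.inr hzK
    · exact Or.inl (hout g z hz hzK)

/-- Moving a vertex along a connected set avoiding the rest of the drawing. -/
theorem SDraw.slide {W F : Type} [Finite W] [Finite F] {H : Multigraph W F} (d : SDraw H) (p : W)
    (N : Set ℂ) (hN : IsPreconnected N) (hp : d.pos p ∈ N)
    (hv : ∀ v, v ≠ p → d.pos v ∉ N) (hA : ∀ g, ¬ H.Incident p g → Disjoint (d.A g) N)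
    (x : ℂ) (hx : x ∈ N) :
    ∃ d' : SDraw H, d'.pos p = x ∧ (∀ v, v ≠ p → d'.pos v = d.pos v) ∧
      (∀ g, ¬ H.Incident p g → d'.A g = d.A g) := by
  classical
  let C : Set ℂ := (⋃ g ∈ {g | ¬ H.Incident p g}, d.A g) ∪ d.pos '' {v | v ≠ p}
  have hC : IsClosed C := by
    refine IsClosed.union ?_ ?_
    · exact (Set.toFinite _).isClosed_biUnion (fun g _ => (d.arc g).isCompact.isClosed)
    · exact ((Set.toFinite _).image _).isClosed
  have hNC : ∀ z ∈ N, z ∉ C := by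
    rintro z hz (h | ⟨v, hvp, rfl⟩)
    · simp only [Set.mem_iUnion] at h
      obtain ⟨g, hg, hzg⟩ := h
      exact Set.disjoint_left.1 (hA g hg) hzg hz
    · exact hv v hvp hz
  let R : ℂ → Prop := fun x => ∃ d' : SDraw H, d'.pos p = x ∧ (∀ v, v ≠ p → d'.pos v = d.pos v) ∧
      (∀ g, ¬ H.Incident p g → d'.A g = d.A g)
  have step : ∀ z ∉ C, ∃ r > 0, ∀ a ∈ Metric.ball z r, ∀ b ∈ Metric.ball z r, R a → R b := by
    intro z hz
    obtain ⟨r, hr, hrC⟩ := Metric.nhds_basis_closedBall.mem_iff.1 (hC.isOpen_compl.mem_nhds hz)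
    refine ⟨r, hr, ?_⟩
    rintro a ha b hb ⟨d', rfl, h2, h3⟩
    have q1 : ∀ v, v ≠ p → d'.pos v ∉ Metric.closedBall z r := by
      intro v hvp hmem
      rw [h2 v hvp] at hmem
      exact hrC hmem (Or.inr ⟨v, hvp, rfl⟩)
    have q2 : ∀ g, ¬ H.Incident p g → Disjoint (d'.A g) (Metric.closedBall z r) := by
      intro g hg
      rw [h3 g hg, Set.disjoint_left]
      intro y hy hyr
      exact hrC hyr (Or.inl (Set.mem_biUnion (show g ∈ {g | ¬ H.Incident p g} from hg) hy))
    obtain ⟨d'', e1, e2, e3⟩ := d'.move p z r ha q1 q2 b (Metric.ball_subset_closedBall hb)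
    refine ⟨d'', by rw [e1, Function.update_self], ?_, ?_⟩
    · intro v hvp
      rw [e1, Function.update_of_ne hvp, h2 v hvp]
    · intro g hg
      rw [e2 g hg, h3 g hg]
  let U : Set ℂ := {z | ∃ r > 0, (∀ b ∈ Metric.ball z r, R b)}
  let U' : Set ℂ := {z | ∃ r > 0, (∀ b ∈ Metric.ball z r, ¬ R b)}
  have hopen : ∀ Q : ℂ → Prop, IsOpen {z | ∃ r > 0, (∀ b ∈ Metric.ball z r, Q b)} := by
    intro Q
    rw [Metric.isOpen_iff]
    rintro z ⟨r, hr, h⟩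
    refine ⟨r / 2, by positivity, ?_⟩
    intro y hy
    refine ⟨r / 2, by positivity, fun b hb => h b ?_⟩
    rw [Metric.mem_ball] at *
    linarith [dist_triangle b y z]
  have hcover : N ⊆ U ∪ U' := by
    intro z hz
    obtain ⟨r, hr, h⟩ := step z (hNC z hz)
    by_cases hRz : R z
    · exact Or.inl ⟨r, hr, fun b hb => h z (Metric.mem_ball_self hr) b hb hRz⟩
    · exact Or.inr ⟨r, hr, fun b hb hRb => hRz (h b hb z (Metric.mem_ball_self hr) hRb)⟩
  have hRp : R (d.pos p) := ⟨d, rfl, fun _ _ => rfl, fun _ _ => rfl⟩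
  by_contra hnR
  have hxU' : x ∈ U' := by
    rcases hcover hx with ⟨r, hr, h⟩ | h
    · exact absurd (h x (Metric.mem_ball_self hr)) hnR
    · exact h
  have hpU : d.pos p ∈ U := by
    rcases hcover hp with h | ⟨r, hr, h⟩
    · exact h
    · exact absurd hRp (h _ (Metric.mem_ball_self hr))
  obtain ⟨z, -, ⟨r, hr, h⟩, ⟨r', hr', h'⟩⟩ :=
    hN U U' (hopen _) (hopen _) hcover ⟨_, hp, hpU⟩ ⟨_, hx, hxU'⟩
  exact h' z (Metric.mem_ball_self hr') (h z (Metric.mem_ball_self hr))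

/-- Add `k` parallel edges joining `p` and `y`. -/
def addEdges {W F : Type} (H : Multigraph W F) (p y : W) (hpy : p ≠ y) (k : ℕ) :
    Multigraph W (F ⊕ Fin k) where
  fst := Sum.elim H.fst (fun _ => p)
  snd := Sum.elim H.snd (fun _ => y)
  no_loop := by
    rintro (g | j)
    · exact H.no_loop g
    · exact hpy

/-- The parabolic arcs used for parallel edges, in normalised coordinates. -/
noncomputable def par (w a : ℂ) (ε j : ℝ) (t : ℝ) : ℂ :=
  w + a * (((1 - ε + ε * t : ℝ) : ℂ) + ((ε * j * (t * (1 - t)) : ℝ) : ℂ) * Complex.I)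

theorem par_coord {w a : ℂ} (ha : a ≠ 0) (ε j t : ℝ) :
    ((par w a ε j t - w) / a).re = 1 - ε + ε * t ∧
      ((par w a ε j t - w) / a).im = ε * j * (t * (1 - t)) := by
  have : (par w a ε j t - w) / a =
      ((1 - ε + ε * t : ℝ) : ℂ) + ((ε * j * (t * (1 - t)) : ℝ) : ℂ) * Complex.I := by
    unfold par
    field_simp
    ring
  rw [this]
  constructor
  · simp [-Complex.ofReal_add, -Complex.ofReal_sub, -Complex.ofReal_mul]
  · simp [-Complex.ofReal_add, -Complex.ofReal_sub, -Complex.ofReal_mul]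

theorem isArc_par {w a : ℂ} (ha : a ≠ 0) {ε : ℝ} (hε : 0 < ε) (j : ℝ) :
    IsArc (par w a ε j '' Set.Icc 0 1) (w + a * ((1 - ε : ℝ) : ℂ)) (w + a) := by
  refine ⟨par w a ε j, ?_, ?_, ?_, ?_, rfl⟩
  · unfold par
    fun_prop
  · intro s _ t _ h
    have h1 := (par_coord (w := w) ha ε j s).1
    rw [h, (par_coord ha ε j t).1] at h1
    have : ε * (t - s) = 0 := by linarith
    rcases mul_eq_zero.1 this with h | h <;> linarith
  · simp [par]
  · simp [par]

theorem norm_par {w a : ℂ} (ha : a ≠ 0) {ε j t : ℝ} (hε : 0 < ε) (hε1 : ε < 1) (hj : 0 ≤ j)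
    (hj1 : j ≤ 1) (ht : 0 ≤ t) (ht1 : t ≤ 1) : dist (par w a ε j t) w ≤ ‖a‖ := by
  have h := par_coord (w := w) ha ε j t
  have hna : 0 < ‖a‖ := norm_pos_iff.2 ha
  rw [dist_eq_norm]
  have : ‖(par w a ε j t - w) / a‖ ≤ 1 := by
    rw [← sq_le_one_iff₀ (norm_nonneg _), Complex.sq_norm, Complex.normSq_apply, h.1, h.2]
    have hu : 0 ≤ 1 - t := by linarith
    have h1 : (j * t) ^ 2 ≤ 1 := by
      have : j * t ≤ 1 := by nlinarith
      have : 0 ≤ j * t := by positivity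
      nlinarith
    have e : (1 - ε + ε * t) * (1 - ε + ε * t) +
        ε * j * (t * (1 - t)) * (ε * j * (t * (1 - t))) =
        1 - ε * (1 - t) * (2 - ε * (1 - t)) + (ε * (1 - t)) ^ 2 * (j * t) ^ 2 := by ring
    rw [e]
    set q := ε * (1 - t) with hq
    have hq0 : 0 ≤ q := by positivity
    have hq1 : q ≤ 1 := by nlinarith
    have : q ^ 2 * (j * t) ^ 2 ≤ q ^ 2 := by nlinarith [sq_nonneg q]
    nlinarith
  rw [norm_div, div_le_one hna] at this
  exact this

open Classical in
/-- Adding parallel edges when `p` and `y` lie on a common empty disc. -/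
theorem SDraw.fan {W F : Type} [Finite F] {H : Multigraph W F} (d : SDraw H) (p y : W)
    (hpy : p ≠ y) (k : ℕ) (ρ : ℝ) (hρ : 0 < ρ) (hy : dist (d.pos y) (d.pos p) = ρ)
    (hv : ∀ v, v ≠ p → v ≠ y → d.pos v ∉ Metric.closedBall (d.pos p) ρ)
    (hA : ∀ g, ¬ H.Incident p g → ∀ z ∈ d.A g, z ∈ Metric.closedBall (d.pos p) ρ → z = d.pos y) :
    Nonempty (SDraw (H.addEdges p y hpy k)) := by
  obtain ⟨c, B, hcB⟩ := d.legs p (d.pos p) ρ (by simpa using hρ)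
  set w := d.pos p with hw
  set K := Metric.closedBall w ρ with hK
  set a := d.pos y - w with ha
  have hna : ‖a‖ = ρ := by rw [ha, ← dist_eq_norm]; exact hy
  have ha0 : a ≠ 0 := by rw [← norm_pos_iff, hna]; exact hρ
  have hwa : w + a = d.pos y := by rw [ha]; ring
  have hyK : d.pos y ∈ K := Metric.mem_closedBall.2 hy.le
  have hwK : w ∈ K := Metric.mem_closedBall_self hρ.le
  replace hcB := fun g (hg : H.Incident p g) (hgy : H.oth p g ≠ y) =>
    hcB g hg (hv _ (H.oth_ne p g) hgy)
  -- real part in normalised coordinates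
  let h : ℂ → ℝ := fun z => ((z - w) / a).re
  have hcne : ∀ g, H.Incident p g → H.oth p g ≠ y → c g ≠ d.pos y := by
    intro g hg hgy hc
    have := (H.oth_incident hg y).1 (d.vert g y (hc ▸ (hcB g hg hgy).1))
    rcases this with h | h
    · exact hpy h
    · exact hgy h
  have hlt : ∀ g, H.Incident p g → H.oth p g ≠ y → h (c g) < 1 := by
    intro g hg hgy
    have hn : ‖(c g - w) / a‖ = 1 := by
      rw [norm_div, ← dist_eq_norm, (hcB g hg hgy).2.1, hna, div_self hρ.ne']
    have h1 : h (c g) ≤ 1 := hn ▸ Complex.re_le_norm _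
    refine lt_of_le_of_ne h1 fun h2 => hcne g hg hgy ?_
    have h3 : ((c g - w) / a).im = 0 := by
      have h4 : ‖(c g - w) / a‖ ^ 2 = 1 := by rw [hn]; norm_num
      rw [Complex.sq_norm, Complex.normSq_apply] at h4
      have h2' : ((c g - w) / a).re = 1 := h2
      rw [h2'] at h4
      nlinarith
    have h5 : (c g - w) / a = 1 := Complex.ext h2 h3
    rw [div_eq_one_iff_eq ha0] at h5
    rw [← hwa, ← h5]; ring
  obtain ⟨ε, hε, hε0, hε1⟩ : ∃ ε : ℝ, (∀ g, H.Incident p g → H.oth p g ≠ y → h (c g) < 1 - ε) ∧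
      0 < ε ∧ ε < 1 := by
    have e1 : ∀ g, ∀ᶠ ε in nhdsWithin (0:ℝ) (Set.Ioi 0),
        (H.Incident p g → H.oth p g ≠ y → h (c g) < 1 - ε) := by
      intro g
      by_cases hg : H.Incident p g ∧ H.oth p g ≠ y
      · have := hlt g hg.1 hg.2
        filter_upwards [Ioo_mem_nhdsGT (show (0:ℝ) < 1 - h (c g) by linarith)] with ε he _ _
        linarith [he.2]
      · filter_upwards with ε h1 h2
        exact absurd ⟨h1, h2⟩ hg
    have e2 := Filter.eventually_all.2 e1
    obtain ⟨ε, h1, h2⟩ := (e2.and (Ioo_mem_nhdsGT (show (0:ℝ) < 1 by norm_num))).exists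
    exact ⟨ε, h1, h2.1, h2.2⟩
  let x : ℂ := w + a * ((1 - ε : ℝ) : ℂ)
  have hx_div : (x - w) / a = ((1 - ε : ℝ) : ℂ) := by
    simp only [x]; field_simp; ring
  have hhx : h x = 1 - ε := by simp only [h]; rw [hx_div, Complex.ofReal_re]
  have hhy : h (d.pos y) = 1 := by
    simp only [h]; rw [← ha, div_self ha0, Complex.one_re]
  have hxw : dist x w = ρ * (1 - ε) := by
    have : x - w = a * ((1 - ε : ℝ) : ℂ) := by simp only [x]; ring
    rw [dist_eq_norm, this, norm_mul, hna, Complex.norm_real, Real.norm_of_nonneg (by linarith)]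
  have hxK : x ∈ K := Metric.mem_closedBall.2 (by rw [hxw]; nlinarith)
  have hxy : x ≠ d.pos y := by
    intro he
    rw [he, hhy] at hhx
    linarith
  -- segments lie in the left half plane
  have hsegh : ∀ g, H.Incident p g → H.oth p g ≠ y → ∀ z ∈ segment ℝ x (c g),
      h z ≤ 1 - ε ∧ (h z = 1 - ε → z = x) := by
    intro g hg hgy z hz
    rw [segment_eq_image_lineMap] at hz
    obtain ⟨s, hs, rfl⟩ := hz
    have e : h (AffineMap.lineMap x (c g) s) = (1 - ε) + s * (h (c g) - (1 - ε)) := by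
      have : (AffineMap.lineMap x (c g) s - w) / a =
          ((1 - ε : ℝ) : ℂ) + (s : ℂ) * ((c g - w) / a - ((1 - ε : ℝ) : ℂ)) := by
        rw [← hx_div]
        simp only [AffineMap.lineMap_apply, vsub_eq_sub, vadd_eq_add, Complex.real_smul]
        field_simp
        ring
      simp only [h]
      rw [this, Complex.add_re, Complex.re_ofReal_mul, Complex.sub_re, Complex.ofReal_re]
    rw [e]
    have := hε g hg hgy
    refine ⟨by nlinarith [hs.1], fun h0 => ?_⟩
    have : s * (h (c g) - (1 - ε)) = 0 := by linarith
    rcases mul_eq_zero.1 this with h1 | h1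
    · simp [h1]
    · linarith
  obtain ⟨idx, hidx, hidx0, hidx1⟩ : ∃ idx : F ⊕ Fin k → ℝ, Function.Injective idx ∧
      (∀ s, 0 ≤ idx s) ∧ ∀ s, idx s ≤ 1 := by
    obtain ⟨f, hf⟩ := Countable.exists_injective_nat (F ⊕ Fin k)
    refine ⟨fun s => 1 / ((f s : ℝ) + 1), ?_, fun s => by positivity, ?_⟩
    · intro s t hst
      simp only [one_div, inv_inj, add_left_inj, Nat.cast_inj] at hst
      exact hf hst
    · intro s
      simp only
      rw [div_le_one (by positivity)]
      have : (0:ℝ) ≤ f s := Nat.cast_nonneg _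
      linarith
  set H' := H.addEdges p y hpy k with hH'
  have hinr : ∀ j : Fin k, H'.Incident p (Sum.inr j) ∧ H'.oth p (Sum.inr j) = y := by
    intro j
    refine ⟨Or.inl rfl, ?_⟩
    simp only [oth]
    exact if_pos rfl
  let A0 : F ⊕ Fin k → Set ℂ := Sum.elim d.A (fun _ => ∅)
  let L : F ⊕ Fin k → Set ℂ := Sum.elim (fun g => segment ℝ x (c g) ∪ B g) (fun _ => ∅)
  let A' : F ⊕ Fin k → Set ℂ := fun s =>
    if H'.Incident p s then
      (if H'.oth p s = y then par w a ε (idx s) '' Set.Icc 0 1 else L s)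
    else A0 s
  have hAP : ∀ s, H'.Incident p s → H'.oth p s = y →
      A' s = par w a ε (idx s) '' Set.Icc 0 1 := by
    intro s h1 h2
    simp only [A']
    rw [if_pos h1, if_pos h2]
  have hAL : ∀ g, H.Incident p g → H.oth p g ≠ y →
      A' (Sum.inl g) = segment ℝ x (c g) ∪ B g := by
    intro g h1 h2
    simp only [A']
    rw [if_pos (show H'.Incident p (Sum.inl g) from h1), if_neg (show ¬ H'.oth p (Sum.inl g) = y from h2)]
    rfl
  have hAN : ∀ g, ¬ H.Incident p g → A' (Sum.inl g) = d.A g := by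
    intro g h1
    simp only [A']
    rw [if_neg (show ¬ H'.Incident p (Sum.inl g) from h1)]
    rfl
  have hcases : ∀ s, (H'.Incident p s ∧ H'.oth p s = y) ∨
      (∃ g, s = Sum.inl g ∧ H.Incident p g ∧ H.oth p g ≠ y) ∨
      (∃ g, s = Sum.inl g ∧ ¬ H.Incident p g) := by
    rintro (g | j)
    · by_cases h1 : H.Incident p g
      · by_cases h2 : H.oth p g = y
        · exact Or.inl ⟨h1, h2⟩
        · exact Or.inr (Or.inl ⟨g, rfl, h1, h2⟩)
      · exact Or.inr (Or.inr ⟨g, rfl, h1⟩)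
    · exact Or.inl (hinr j)
  have hcK : ∀ g, H.Incident p g → H.oth p g ≠ y → c g ∈ K := fun g hg hgy =>
    Metric.mem_closedBall.2 (hcB g hg hgy).2.1.le
  have hseg : ∀ g, H.Incident p g → H.oth p g ≠ y → segment ℝ x (c g) ⊆ K := fun g hg hgy =>
    (convex_closedBall w ρ).segment_subset hxK (hcK g hg hgy)
  have hparK : ∀ s, par w a ε (idx s) '' Set.Icc 0 1 ⊆ K := by
    rintro s _ ⟨t, ht, rfl⟩
    rw [hK, Metric.mem_closedBall, ← hna]
    exact norm_par ha0 hε0 hε1 (hidx0 s) (hidx1 s) ht.1 ht.2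
  have hparh : ∀ s, ∀ z ∈ par w a ε (idx s) '' Set.Icc 0 1,
      1 - ε ≤ h z := by
    rintro s _ ⟨t, ht, rfl⟩
    simp only [h]
    rw [(par_coord ha0 _ _ _).1]
    nlinarith [ht.1]
  have hLK : ∀ g, H.Incident p g → H.oth p g ≠ y → ∀ z ∈ segment ℝ x (c g) ∪ B g, z ∈ K →
      z ∈ segment ℝ x (c g) := by
    rintro g hg hgy z (hz | hz) hzK
    · exact hz
    · rw [(hcB g hg hgy).2.2.2.2 z hz hzK]
      exact right_mem_segment ℝ x (c g)
  have hout : ∀ s z, z ∈ A' s → z ∉ K → ∃ g, s = Sum.inl g ∧ z ∈ d.A g := by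
    intro s z hz hzK
    rcases hcases s with ⟨h1, h2⟩ | ⟨g, rfl, h1, h2⟩ | ⟨g, rfl, h1⟩
    · rw [hAP s h1 h2] at hz
      exact absurd (hparK s hz) hzK
    · rw [hAL g h1 h2] at hz
      rcases hz with hz | hz
      · exact absurd (hseg g h1 h2 hz) hzK
      · exact ⟨g, rfl, (hcB g h1 h2).2.2.2.1 hz⟩
    · rw [hAN g h1] at hz
      exact ⟨g, rfl, hz⟩
  let pos' := Function.update d.pos p x
  have hposp : pos' p = x := Function.update_self _ _ _
  have hpos : ∀ v, v ≠ p → pos' v = d.pos v := fun v hvp =>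
    Function.update_of_ne hvp _ _
  have hxv : ∀ v, v ≠ p → x ≠ d.pos v := by
    intro v hvp
    by_cases hvy : v = y
    · subst hvy; exact hxy
    · intro he
      exact hv v hvp hvy (he ▸ hxK)
  -- a pair of edges, up to symmetry
  have hLP : ∀ g s z, H.Incident p g → H.oth p g ≠ y → z ∈ segment ℝ x (c g) →
      z ∈ par w a ε (idx s) '' Set.Icc 0 1 → z ∈ Set.range pos' := by
    intro g s z h1 h2 hz hz'
    have := hsegh g h1 h2 z hz
    exact ⟨p, by rw [hposp, this.2 (le_antisymm this.1 (hparh s z hz'))]⟩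
  refine ⟨⟨pos', A', ?_, ?_, ?_, ?_⟩⟩
  · intro u v huv
    by_cases hu : u = p <;> by_cases hv' : v = p
    · rw [hu, hv']
    · subst hu
      rw [hposp, hpos v hv'] at huv
      exact absurd huv (hxv v hv')
    · subst hv'
      rw [hposp, hpos u hu] at huv
      exact absurd huv.symm (hxv u hu)
    · rw [hpos u hu, hpos v hv'] at huv
      exact d.inj huv
  · intro s
    rcases hcases s with ⟨h1, h2⟩ | ⟨g, rfl, h1, h2⟩ | ⟨g, rfl, h1⟩
    · rw [H'.oth_arc h1, h2, hAP s h1 h2, hposp, hpos y hpy.symm, ← hwa]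
      exact isArc_par ha0 hε0 _
    · change IsArc _ (pos' (H.fst g)) (pos' (H.snd g))
      rw [H.oth_arc h1, hposp, hpos _ (H.oth_ne p g), hAL g h1 h2]
      obtain ⟨q1, q2, q3, q4, q5⟩ := hcB g h1 h2
      have hxc : x ≠ c g := by
        intro he
        rw [← he, hxw] at q2
        nlinarith
      exact (isArc_segment hxc).trans q3 (fun z hz => q5 z hz.2 (hseg g h1 h2 hz.1))
    · change IsArc _ (pos' (H.fst g)) (pos' (H.snd g))
      rw [hAN g h1]
      have h2 : H.fst g ≠ p := fun h => h1 (Or.inl h)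
      have h3 : H.snd g ≠ p := fun h => h1 (Or.inr h)
      rw [hpos _ h2, hpos _ h3]
      exact d.arc g
  · intro s v hvs
    by_cases hvp : v = p
    · subst hvp
      rw [hposp] at hvs
      rcases hcases s with ⟨h1, h2⟩ | ⟨g, rfl, h1, h2⟩ | ⟨g, rfl, h1⟩
      · exact h1
      · exact h1
      · rw [hAN g h1] at hvs
        exact absurd (hA g h1 x hvs hxK) hxy
    · rw [hpos v hvp] at hvs
      by_cases hvy : v = y
      · subst hvy
        rcases hcases s with ⟨h1, h2⟩ | ⟨g, rfl, h1, h2⟩ | ⟨g, rfl, h1⟩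
        · exact (H'.oth_incident h1 v).2 (Or.inr h2)
        · rw [hAL g h1 h2] at hvs
          have := (hsegh g h1 h2 _ (hLK g h1 h2 _ hvs hyK)).1
          rw [hhy] at this
          linarith
        · rw [hAN g h1] at hvs
          exact d.vert g v hvs
      · obtain ⟨g, rfl, hg⟩ := hout s _ hvs (hv v hvp hvy)
        exact d.vert g v hg
  · intro s s' hss z hz hz'
    by_cases hzK : z ∈ K
    · have hyr : d.pos y ∈ Set.range pos' := ⟨y, hpos y hpy.symm⟩
      rcases hcases s with ⟨h1, h2⟩ | ⟨g, rfl, h1, h2⟩ | ⟨g, rfl, h1⟩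
      · rw [hAP s h1 h2] at hz
        rcases hcases s' with ⟨h1', h2'⟩ | ⟨g', rfl, h1', h2'⟩ | ⟨g', rfl, h1'⟩
        · rw [hAP s' h1' h2'] at hz'
          obtain ⟨t, ht, rfl⟩ := hz
          obtain ⟨t', ht', he⟩ := hz'
          have k1 := par_coord (w := w) ha0 ε (idx s) t
          have k2 := par_coord (w := w) ha0 ε (idx s') t'
          rw [he, k1.1, k1.2] at k2
          have htt : t = t' := by
            have : ε * (t - t') = 0 := by linarith [k2.1]
            rcases mul_eq_zero.1 this with h | h <;> linarith
          subst htt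
          have hz0 : (ε * (t * (1 - t))) * (idx s - idx s') = 0 := by linarith [k2.2]
          have hne : idx s - idx s' ≠ 0 := sub_ne_zero.2 (fun h => hss (hidx h))
          have h3 := (mul_eq_zero.1 hz0).resolve_right hne
          have h4 := (mul_eq_zero.1 h3).resolve_left hε0.ne'
          rcases mul_eq_zero.1 h4 with h5 | h5
          · refine ⟨p, ?_⟩
            rw [hposp, h5]
            simp [par, x]
          · have : t = 1 := by linarith
            rw [this]
            convert hyr using 1
            rw [← hwa]
            simp [par]
        · rw [hAL g' h1' h2'] at hz'
          exact hLP g' s z h1' h2' (hLK g' h1' h2' z hz' hzK) hz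
        · rw [hAN g' h1'] at hz'
          rw [hA g' h1' z hz' hzK]
          exact hyr
      · rw [hAL g h1 h2] at hz
        replace hz := hLK g h1 h2 z hz hzK
        rcases hcases s' with ⟨h1', h2'⟩ | ⟨g', rfl, h1', h2'⟩ | ⟨g', rfl, h1'⟩
        · rw [hAP s' h1' h2'] at hz'
          exact hLP g s' z h1 h2 hz hz'
        · rw [hAL g' h1' h2'] at hz'
          replace hz' := hLK g' h1' h2' z hz' hzK
          have hgg : g ≠ g' := fun h => hss (by rw [h])
          have hcc : c g ≠ c g' := by
            intro he
            obtain ⟨v, hvc⟩ := d.disj g g' hgg (c g) (hcB g h1 h2).1 (he ▸ (hcB g' h1' h2').1)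
            by_cases hvp : v = p
            · subst hvp
              have := (hcB g h1 h2).2.1
              rw [← hvc, ← hw, dist_self] at this
              linarith
            · by_cases hvy : v = y
              · subst hvy
                exact hcne g h1 h2 hvc.symm
              · exact hv v hvp hvy (hvc ▸ hcK g h1 h2)
          refine ⟨p, ?_⟩
          rw [hposp]
          exact (chord_inter hxK (hcB g h1 h2).2.1 (hcB g' h1' h2').2.1 hcc hz hz').symm
        · rw [hAN g' h1'] at hz'
          rw [hA g' h1' z hz' hzK]
          exact hyr
      · rw [hAN g h1] at hz
        rw [hA g h1 z hz hzK]
        exact hyr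
    · obtain ⟨g, rfl, hg⟩ := hout s z hz hzK
      obtain ⟨g', rfl, hg'⟩ := hout s' z hz' hzK
      obtain ⟨v, rfl⟩ := d.disj g g' (fun h => hss (by rw [h])) z hg hg'
      have hvp : v ≠ p := by
        rintro rfl
        exact hzK hwK
      exact ⟨v, hpos v hvp⟩

/-- Two externally tangent discs meet in a single point. -/
theorem tangent_discs {y w z : ℂ} {r ρ : ℝ} (hr : 0 < r) (hρ : 0 < ρ) (hd : dist w y = r + ρ)
    (hz : z ∈ Metric.closedBall w ρ) (hz' : z ∈ Metric.closedBall y r) :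
    z = AffineMap.lineMap y w (r / (r + ρ)) := by
  rw [Metric.mem_closedBall] at hz hz'
  have htri := dist_triangle w z y
  rw [dist_comm w z] at htri
  have h1 : dist z y = r := by linarith
  have h2 : dist z w = ρ := by linarith
  refine eq_lineMap_of_dist_eq_mul_of_dist_eq_mul ?_ ?_
  · rw [dist_comm y z, h1, dist_comm y w, hd]
    field_simp
  · rw [h2, dist_comm y w, hd]
    field_simp
    ring

open Classical in
/-- Adding parallel edges along an arc which may only meet edges at `p`. -/
theorem SDraw.addE {W F : Type} [Finite W] [Finite F] {H : Multigraph W F} (d : SDraw H) (p y : W)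
    (hpy : p ≠ y) (k : ℕ) (σ : Set ℂ) (hσ : IsArc σ (d.pos p) (d.pos y))
    (hσv : ∀ v, v ≠ p → v ≠ y → d.pos v ∉ σ)
    (hσA : ∀ g, ¬ H.Incident p g → ∀ z ∈ σ, z ∈ d.A g → z = d.pos y) :
    Nonempty (SDraw (H.addEdges p y hpy k)) := by
  -- a small disc around `y`
  obtain ⟨r, hr, hrv, hrA⟩ : ∃ r > 0, (∀ v, v ≠ y → d.pos v ∉ Metric.closedBall (d.pos y) r) ∧
      ∀ g, ¬ H.Incident y g → Disjoint (d.A g) (Metric.closedBall (d.pos y) r) := by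
    let C : Set ℂ := (⋃ g ∈ {g | ¬ H.Incident y g}, d.A g) ∪ d.pos '' {v | v ≠ y}
    have hC : IsClosed C := by
      refine IsClosed.union ?_ ?_
      · exact (Set.toFinite _).isClosed_biUnion (fun g _ => (d.arc g).isCompact.isClosed)
      · exact ((Set.toFinite _).image _).isClosed
    have hyC : d.pos y ∉ C := by
      rintro (h | ⟨v, hvp, h⟩)
      · simp only [Set.mem_iUnion] at h
        obtain ⟨g, hg, hzg⟩ := h
        exact hg (d.vert g y hzg)
      · exact hvp (d.inj h)
    obtain ⟨r, hr, hrC⟩ := Metric.nhds_basis_closedBall.mem_iff.1 (hC.isOpen_compl.mem_nhds hyC)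
    refine ⟨r, hr, ?_, ?_⟩
    · intro v hvy hmem
      exact hrC hmem (Or.inr ⟨v, hvy, rfl⟩)
    · intro g hg
      rw [Set.disjoint_left]
      intro z hz hzr
      exact hrC hzr (Or.inl (Set.mem_biUnion (show g ∈ {g | ¬ H.Incident y g} from hg) hz))
  obtain ⟨a0, ha0, ha0D, ha0i, happ⟩ := hσ.approach
    (Metric.isClosed_closedBall (x := d.pos y) (ε := r)) (hrv p hpy)
    (Metric.mem_closedBall_self hr.le)
  have ha0y : a0 ≠ d.pos y := by
    rintro rfl
    exact ha0i (Metric.ball_subset_interior_closedBall (Metric.mem_ball_self hr))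
  obtain ⟨δ, hδ, hδv, hδA⟩ : ∃ δ > 0,
      (∀ v, v ≠ p → v ≠ y → d.pos v ∉ Metric.closedBall a0 δ) ∧
      ∀ g, ¬ H.Incident p g → Disjoint (d.A g) (Metric.closedBall a0 δ) := by
    let C : Set ℂ := (⋃ g ∈ {g | ¬ H.Incident p g}, d.A g) ∪ d.pos '' {v | v ≠ p ∧ v ≠ y}
    have hC : IsClosed C := by
      refine IsClosed.union ?_ ?_
      · exact (Set.toFinite _).isClosed_biUnion (fun g _ => (d.arc g).isCompact.isClosed)
      · exact ((Set.toFinite _).image _).isClosed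
    have hyC : a0 ∉ C := by
      rintro (h | ⟨v, hvp, h⟩)
      · simp only [Set.mem_iUnion] at h
        obtain ⟨g, hg, hzg⟩ := h
        exact ha0y (hσA g hg _ ha0 hzg)
      · exact hσv v hvp.1 hvp.2 (h ▸ ha0)
    obtain ⟨r, hr, hrC⟩ := Metric.nhds_basis_closedBall.mem_iff.1 (hC.isOpen_compl.mem_nhds hyC)
    refine ⟨r, hr, ?_, ?_⟩
    · intro v hvp hvy hmem
      exact hrC hmem (Or.inr ⟨v, ⟨hvp, hvy⟩, rfl⟩)
    · intro g hg
      rw [Set.disjoint_left]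
      intro z hz hzr
      exact hrC hzr (Or.inl (Set.mem_biUnion (show g ∈ {g | ¬ H.Incident p g} from hg) hz))
  obtain ⟨w, N, hwN, hpN, hN, hNσ, hND, hwa⟩ := happ (δ / 2) (by positivity)
  have hwD : w ∉ Metric.closedBall (d.pos y) r := Set.disjoint_left.1 hND hwN
  set ρ := dist w (d.pos y) - r with hρdef
  have hρ : 0 < ρ := by
    rw [Metric.mem_closedBall, not_le] at hwD
    linarith
  have hρδ : ρ < δ / 2 := by
    have := dist_triangle w a0 (d.pos y)
    rw [Metric.mem_closedBall] at ha0D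
    linarith
  have hdw : dist w (d.pos y) = r + ρ := by rw [hρdef]; ring
  set t : ℂ := AffineMap.lineMap (d.pos y) w (r / (r + ρ)) with ht
  have htang : ∀ z ∈ Metric.closedBall w ρ, z ∈ Metric.closedBall (d.pos y) r → z = t :=
    fun z hz hz' => tangent_discs hr hρ hdw hz hz'
  have hty : dist t (d.pos y) = r := by
    rw [ht, dist_lineMap_left, dist_comm (d.pos y) w, hdw, Real.norm_of_nonneg (by positivity)]
    field_simp
  have htw : dist t w = ρ := by
    rw [ht, dist_lineMap_right, dist_comm (d.pos y) w, hdw, Real.norm_of_nonneg]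
    · field_simp
      ring
    · rw [sub_nonneg, div_le_one (by positivity)]
      linarith
  have hballs : Metric.closedBall w ρ ⊆ Metric.closedBall a0 δ := by
    intro z hz
    rw [Metric.mem_closedBall] at *
    linarith [dist_triangle z w a0]
  -- move `y`
  obtain ⟨d1, p1, -, s1⟩ := d.move y (d.pos y) r (by simpa using hr) hrv hrA t
    (Metric.mem_closedBall.2 hty.le)
  have p1y : d1.pos y = t := by rw [p1, Function.update_self]
  have p1v : ∀ v, v ≠ y → d1.pos v = d.pos v := fun v hv => by rw [p1, Function.update_of_ne hv]
  -- move `p`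
  have hd1v : ∀ v, v ≠ p → d1.pos v ∉ N := by
    intro v hv hm
    by_cases hvy : v = y
    · subst hvy
      rw [p1y] at hm
      exact Set.disjoint_left.1 hND hm (Metric.mem_closedBall.2 hty.le)
    · rw [p1v v hvy] at hm
      exact hσv v hv hvy (hNσ hm)
  have hd1A : ∀ g, ¬ H.Incident p g → Disjoint (d1.A g) N := by
    intro g hg
    rw [Set.disjoint_left]
    intro z hz hzN
    rcases s1 g hz with h | h
    · have := hσA g hg z (hNσ hzN) h
      rw [this] at hzN
      exact Set.disjoint_left.1 hND hzN (Metric.mem_closedBall_self hr.le)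
    · exact Set.disjoint_left.1 hND hzN h
  obtain ⟨d2, p2, p2v, A2⟩ := d1.slide p N hN (by rw [p1v p hpy]; exact hpN) hd1v hd1A w hwN
  have p2y : d2.pos y = t := by rw [p2v y hpy.symm, p1y]
  refine d2.fan p y hpy k ρ hρ ?_ ?_ ?_
  · rw [p2y, p2, htw]
  · intro v hvp hvy hm
    rw [p2v v hvp, p1v v hvy, p2] at hm
    exact hδv v hvp hvy (hballs hm)
  · intro g hg z hz hzb
    rw [p2] at hzb
    rw [A2 g hg] at hz
    rw [p2y]
    rcases s1 g hz with h | h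
    · exact absurd (hballs hzb) (Set.disjoint_left.1 (hδA g hg) h)
    · exact htang z hzb h

/-- Doubling an edge. -/
theorem SDraw.double {W F : Type} [Finite W] [Finite F] {H : Multigraph W F} (d : SDraw H) (g : F)
    (k : ℕ) {p y : W} (hp : H.fst g = p) (hy : H.snd g = y) (hpy : p ≠ y) :
    Nonempty (SDraw (H.addEdges p y hpy k)) := by
  subst hp hy
  refine d.addE _ _ hpy k (d.A g) (d.arc g) ?_ ?_
  · intro v h1 h2 hm
    rcases d.vert g v hm with h | h
    · exact h1 h.symm
    · exact h2 h.symm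
  · intro g' hg' z hz hz'
    have hne : g ≠ g' := by
      rintro rfl
      exact hg' (Or.inl rfl)
    obtain ⟨v, rfl⟩ := d.disj g g' hne z hz hz'
    rcases d.vert g v hz with h | h
    · exact absurd (h ▸ d.vert g' v hz') hg'
    · rw [h]

/-- Restricting a drawing to a subgraph. -/
theorem SDraw.comap {W F F' : Type} {H : Multigraph W F} (d : SDraw H) (H' : Multigraph W F')
    (φ : F' → F) (hφ : Function.Injective φ) (h1 : ∀ e, H'.fst e = H.fst (φ e))
    (h2 : ∀ e, H'.snd e = H.snd (φ e)) : Nonempty (SDraw H') := by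
  refine ⟨⟨d.pos, fun e => d.A (φ e), d.inj, ?_, ?_, ?_⟩⟩
  · intro e
    rw [h1, h2]
    exact d.arc _
  · intro e v h
    rw [h1, h2]
    exact d.vert _ v h
  · intro e e' hne
    exact d.disj _ _ (fun h => hne (hφ h))

/-- A set drawing gives planarity. -/
theorem SDraw.planar {W F : Type} {H : Multigraph W F} (d : SDraw H) : H.Planar := by
  have h := d.arc
  choose γ h1 h2 h3 h4 h5 using h
  let T := Complex.equivRealProdCLM
  have hinter : ∀ e t, t ∈ Set.Ioo (0:ℝ) 1 → γ e t ∈ d.A e ∧ ∀ v, γ e t ≠ d.pos v := by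
    intro e t ht
    have hm : γ e t ∈ d.A e := by
      rw [← h5 e]
      exact ⟨t, Set.Ioo_subset_Icc_self ht, rfl⟩
    refine ⟨hm, fun v hv => ?_⟩
    rcases d.vert e v (hv ▸ hm) with h | h
    · rw [← h, ← h3 e] at hv
      have := h2 e (Set.Ioo_subset_Icc_self ht) (by simp) hv
      exact ht.1.ne' this
    · rw [← h, ← h4 e] at hv
      have := h2 e (Set.Ioo_subset_Icc_self ht) (by simp) hv
      exact ht.2.ne this
  refine ⟨⟨fun v => T (d.pos v), fun e t => T (γ e t), ?_, ?_, ?_, ?_, ?_, ?_⟩, ?_⟩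
  · intro e
    exact T.continuous.comp_continuousOn (h1 e)
  · intro e s hs t ht hst
    exact h2 e hs ht (T.injective hst)
  · intro e
    simp only [h3]
  · intro e
    simp only [h4]
  · exact T.injective.comp d.inj
  · rintro e v ⟨t, ht, htv⟩
    exact (hinter e t ht).2 v (T.injective htv)
  · rw [Set.eq_empty_iff_forall_notMem]
    rintro ⟨e, e'⟩ ⟨hne, z, ⟨t, ht, rfl⟩, ⟨t', ht', he⟩⟩
    have he' : γ e' t' = γ e t := T.injective he
    obtain ⟨v, hv⟩ := d.disj e e' hne (γ e t) (hinter e t ht).1 (he' ▸ (hinter e' t' ht').1)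
    exact (hinter e t ht).2 v hv.symm

/-- Passing from a drawing to arcs as sets. -/
theorem Drawing.toSets {W F : Type} {H : Multigraph W F} (d : Drawing H) :
    ∃ (pos : W → ℂ) (A : F → Set ℂ), Function.Injective pos ∧
      (∀ e, IsArc (A e) (pos (H.fst e)) (pos (H.snd e))) ∧
      (∀ e v, pos v ∈ A e → H.fst e = v ∨ H.snd e = v) ∧
      (∀ e e', e ≠ e' → (∃ z ∈ A e, z ∈ A e' ∧ z ∉ Set.range pos) → (e, e') ∈ d.crossings) := by
  let T := Complex.equivRealProdCLM
  refine ⟨fun v => T.symm (d.vpos v), fun e => (fun t => T.symm (d.arc e t)) '' Set.Icc 0 1,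
    T.symm.injective.comp d.vpos_injective, ?_, ?_, ?_⟩
  · intro e
    refine ⟨_, T.symm.continuous.comp_continuousOn (d.arc_continuous e), ?_, ?_, ?_, rfl⟩
    · intro s hs t ht hst
      exact d.arc_injOn e hs ht (T.symm.injective hst)
    · simp only [d.arc_zero, Function.comp_apply]
    · simp only [d.arc_one, Function.comp_apply]
  · rintro e v ⟨t, ht, htv⟩
    have htv' : d.arc e t = d.vpos v := T.symm.injective htv
    rcases ht.1.eq_or_lt with rfl | h0
    · rw [d.arc_zero] at htv'
      exact Or.inl (d.vpos_injective htv')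
    · rcases ht.2.eq_or_lt with rfl | h1
      · rw [d.arc_one] at htv'
        exact Or.inr (d.vpos_injective htv')
      · exact absurd ⟨t, ⟨h0, h1⟩, htv'⟩ (d.vertex_not_interior e v)
  · have key : ∀ e z, z ∈ (fun t => T.symm (d.arc e t)) '' Set.Icc 0 1 →
        z ∉ Set.range (fun v => T.symm (d.vpos v)) → T z ∈ d.arc e '' Set.Ioo 0 1 := by
      rintro e z ⟨t, ht, rfl⟩ hn
      refine ⟨t, ⟨lt_of_le_of_ne ht.1 ?_, lt_of_le_of_ne ht.2 ?_⟩, by simp⟩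
      · rintro rfl
        exact hn ⟨H.fst e, by simp only [d.arc_zero]⟩
      · rintro rfl
        exact hn ⟨H.snd e, by simp only [d.arc_one]⟩
    rintro e e' hne ⟨z, hz, hz', hn⟩
    exact ⟨hne, T z, key e z hz hn, key e' z hz' hn⟩

/-- Delete the edges in `S` and add a new vertex joined to the vertices `u i`. -/
def starG {V E : Type} (G : Multigraph V E) (S : Finset E) {n : ℕ} (u : Fin n → V) :
    Multigraph (Option V) ({g // g ∉ S} ⊕ Fin n) where
  fst := Sum.elim (fun g => some (G.fst g)) (fun _ => none)
  snd := Sum.elim (fun g => some (G.snd g)) (fun i => some (u i))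
  no_loop := by
    rintro (g | i)
    · simpa using G.no_loop g
    · simp

theorem starG_degree (G : Multigraph V E) (S : Finset E) {n : ℕ} (u : Fin n → V) :
    (G.starG S u).degree none = n := by
  rw [degree, Finset.card_filter, Fintype.sum_sum_type]
  simp [Incident, starG]

theorem cut_compl (G : Multigraph V E) (A : Finset V) : G.cut Aᶜ = G.cut A := by
  unfold cut
  ext e
  simp only [mem_filter, mem_univ, true_and, mem_compl]
  tauto

theorem starG_connected (G : Multigraph V E) (S : Finset E) (u : Fin 5 → V)
    (h5 : G.EdgeConnected 5)
    (hS : ∀ B : Finset V, (S ∩ G.cut B).card ≤ (univ.filter fun i => u i ∈ B).card) :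
    (G.starG S u).EdgeConnected 5 := by
  have main : ∀ A : Finset (Option V), A.Nonempty → none ∉ A → 5 ≤ ((G.starG S u).cut A).card := by
    intro A hA hn
    let B : Finset V := univ.filter fun v => some v ∈ A
    have hB : ∀ v, v ∈ B ↔ some v ∈ A := by simp [B]
    have e1 : ((G.starG S u).cut A).card =
        (∑ g ∈ Sᶜ, if ¬ ((G.fst g ∈ B) ↔ (G.snd g ∈ B)) then 1 else 0) +
          (univ.filter fun i => u i ∈ B).card := by
      rw [cut, Finset.card_filter, Fintype.sum_sum_type, Finset.card_filter]
      congr 1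
      · rw [Finset.sum_subtype (p := fun g => g ∉ S) Sᶜ (fun g => Finset.mem_compl)]
        refine Finset.sum_congr rfl fun g _ => ?_
        simp only [starG, hB, Sum.elim_inl]
        congr
      · simp [starG, hB, hn]
    have e2 : (G.cut B).card =
        (S ∩ G.cut B).card +
        (∑ g ∈ Sᶜ, if ¬ ((G.fst g ∈ B) ↔ (G.snd g ∈ B)) then 1 else 0) := by
      rw [← Finset.card_filter, ← Finset.card_union_of_disjoint]
      · congr 1
        ext g
        simp only [cut, mem_union, mem_inter, mem_filter, mem_univ, mem_compl, true_and]
        tauto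
      · rw [Finset.disjoint_left]
        intro g
        simp only [mem_inter, mem_filter, mem_compl]
        tauto
    rw [e1]
    by_cases hu : B = univ
    · have : (univ.filter fun i => u i ∈ B).card = 5 := by simp [hu]
      omega
    · have hBn : B.Nonempty := by
        obtain ⟨a, ha⟩ := hA
        cases a with
        | none => exact absurd ha hn
        | some v => exact ⟨v, (hB v).2 ha⟩
      have := h5 B hBn hu
      have := hS B
      omega
  intro A hA hu
  by_cases hn : none ∈ A
  · rw [← cut_compl]
    refine main _ ?_ (by simpa using hn)
    rw [Finset.nonempty_iff_ne_empty]
    intro h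
    exact hu (by simpa using h)
  · exact main A hA hn

/-- The contribution of an edge to the net outdegree. -/
def contr (G : Multigraph V E) (D : E → Bool) (v : V) (e : E) : ZMod 3 :=
  (if G.tail D e = v then 1 else 0) - (if G.head D e = v then 1 else 0)

theorem net_eq (G : Multigraph V E) (D : E → Bool) (v : V) :
    ((G.outDeg D v - G.inDeg D v : ℤ) : ZMod 3) = ∑ e, G.contr D v e := by
  simp [outDeg, inDeg, contr, Finset.sum_sub_distrib]

theorem sum_contr (G : Multigraph V E) (D : E → Bool) (e : E) : ∑ v, G.contr D v e = 0 := by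
  simp [contr, Finset.sum_sub_distrib]

theorem starG_orient (G : Multigraph V E) (S : Finset E) {n : ℕ} (u : Fin n → V)
    (h : (G.starG S u).Z3ExtendableAt none) : G.Z3Connected := by
  intro β hβ
  let T : E → Bool := fun _ => true
  let β' : Option V → ZMod 3 := fun o => o.elim (n : ZMod 3)
    (fun v => β v - ∑ g ∈ S, G.contr T v g - ∑ i, (if u i = v then 1 else 0))
  have hb : IsBoundary β' := by
    unfold IsBoundary at *
    rw [Fintype.sum_option]
    simp only [β', Option.elim_none, Option.elim_some, Finset.sum_sub_distrib]
    rw [hβ, Finset.sum_comm, Finset.sum_congr rfl (fun g _ => G.sum_contr T g), Finset.sum_comm]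
    simp
  obtain ⟨D, hD1, hD2⟩ := h β' hb (fun _ => true) (by
    rw [net_eq, Fintype.sum_sum_type]
    simp [contr, tail, head, starG, β'])
  refine ⟨fun g => if hg : g ∉ S then D (Sum.inl ⟨g, hg⟩) else true, ?_⟩
  intro v
  have hv := hD2 (some v)
  rw [net_eq] at hv ⊢
  rw [Fintype.sum_sum_type] at hv
  set D' : E → Bool := fun g => if hg : g ∉ S then D (Sum.inl ⟨g, hg⟩) else true with hD'
  have e1 : ∑ g ∈ S, G.contr D' v g = ∑ g ∈ S, G.contr T v g := by
    refine Finset.sum_congr rfl fun g hg => ?_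
    simp [contr, tail, head, hD', hg, T]
  have e2 : ∑ g ∈ Sᶜ, G.contr D' v g =
      ∑ g : {g // g ∉ S}, (G.starG S u).contr D (some v) (Sum.inl g) := by
    rw [Finset.sum_subtype (p := fun g => g ∉ S) Sᶜ (fun g => Finset.mem_compl)]
    refine Finset.sum_congr rfl fun g _ => ?_
    have : D' g = D (Sum.inl g) := by
      simp only [hD']
      rw [dif_pos g.2]
    simp only [contr, tail, head, this, starG, Sum.elim_inl]
    by_cases hDg : D (Sum.inl g) = true <;> simp [hDg]
  have e3 : ∑ i, (G.starG S u).contr D (some v) (Sum.inr i) =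
      - ∑ i, (if u i = v then (1 : ZMod 3) else 0) := by
    rw [← Finset.sum_neg_distrib]
    refine Finset.sum_congr rfl fun i _ => ?_
    have : D (Sum.inr i) = true := hD1 (Sum.inr i) (Or.inl rfl)
    simp [contr, tail, head, this, starG]
  rw [← Finset.sum_add_sum_compl S, e1, e2]
  rw [e3] at hv
  have hv' : β' (some v) = β v - ∑ g ∈ S, G.contr T v g -
      ∑ i, (if u i = v then (1 : ZMod 3) else 0) := rfl
  rw [hv'] at hv
  linear_combination hv

/-- Assembling a drawing of the star graph. -/
theorem starG_draw {V E : Type} {G : Multigraph V E} {pos : V → ℂ} {A : E → Set ℂ}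
    (hinj : Function.Injective pos)
    (harc : ∀ e, IsArc (A e) (pos (G.fst e)) (pos (G.snd e)))
    (hvert : ∀ e v, pos v ∈ A e → G.fst e = v ∨ G.snd e = v)
    (S : Finset E)
    (hX : ∀ g g', g ∉ S → g ≠ g' → ∀ z ∈ A g, z ∈ A g' → z ∈ Set.range pos)
    {n : ℕ} (u : Fin n → V) (p : ℂ) (L : Fin n → Set ℂ)
    (hL : ∀ i, IsArc (L i) p (pos (u i))) (hLv : ∀ i v, pos v ∈ L i → u i = v)
    (hLA : ∀ i, ∃ f ∈ S, L i ⊆ A f)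
    (hLL : ∀ i j, i ≠ j → ∀ z ∈ L i, z ∈ L j → z = p ∨ z ∈ Set.range pos)
    (hp : p ∉ Set.range pos) (hpA : ∃ f ∈ S, p ∈ A f) :
    ∃ d : SDraw (G.starG S u), d.pos none = p ∧ (∀ v, d.pos (some v) = pos v) ∧
      ∀ g, d.A (Sum.inl g) = A g := by
  have hr : ∀ z, z ∈ Set.range pos → z ∈ Set.range (fun o : Option V => o.elim p pos) := by
    rintro _ ⟨v, rfl⟩
    exact ⟨some v, rfl⟩
  have hLA' : ∀ i g, g ∉ S → ∀ z ∈ A g, z ∈ L i → z ∈ Set.range pos := by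
    intro i g hg z hz hz'
    obtain ⟨f, hf, hs⟩ := hLA i
    exact hX g f hg (by rintro rfl; exact hg hf) z hz (hs hz')
  refine ⟨⟨fun o => o.elim p pos, Sum.elim (fun g => A g) L, ?_, ?_, ?_, ?_⟩, rfl, fun _ => rfl,
    fun _ => rfl⟩
  · rintro (_ | v) (_ | w) h
    · rfl
    · exact absurd ⟨w, h.symm⟩ hp
    · exact absurd ⟨v, h⟩ hp
    · exact congrArg some (hinj h)
  · rintro (g | i)
    · exact harc g
    · exact hL i
  · rintro (g | i) (_ | v) h
    · obtain ⟨f, hf, hpf⟩ := hpA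
      refine absurd (hX g f g.2 ?_ p h hpf) hp
      intro he
      exact g.2 (he ▸ hf)
    · rcases hvert g v h with h | h
      · exact Or.inl (congrArg some h)
      · exact Or.inr (congrArg some h)
    · exact Or.inl rfl
    · exact Or.inr (congrArg some (hLv i v h))
  · rintro (g | i) (g' | j) hne z hz hz'
    · refine hr z (hX g g' g.2 ?_ z hz hz')
      intro he
      exact hne (congrArg Sum.inl (Subtype.ext he))
    · exact hr z (hLA' j g g.2 z hz hz')
    · exact hr z (hLA' i g' g'.2 z hz' hz)
    · rcases hLL i j (fun h => hne (congrArg Sum.inr h)) z hz hz' with h | h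
      · exact ⟨none, h.symm⟩
      · exact hr z h

theorem IsArc.exists_interior {A : Set ℂ} {a b : ℂ} (h : IsArc A a b) :
    ∃ c ∈ A, c ≠ a ∧ c ≠ b := by
  obtain ⟨γ, -, hi, rfl, rfl, rfl⟩ := h
  refine ⟨γ (1 / 2), ⟨1 / 2, by norm_num, rfl⟩, ?_, ?_⟩
  · intro h
    have := hi (by norm_num) (by norm_num) h
    norm_num at this
  · intro h
    have := hi (by norm_num) (by norm_num) h
    norm_num at this

/-- The case where no genuine crossing has to be resolved. -/
theorem star_case_one {G : Multigraph V E} {pos : V → ℂ} {A : E → Set ℂ}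
    (hinj : Function.Injective pos)
    (harc : ∀ e, IsArc (A e) (pos (G.fst e)) (pos (G.snd e)))
    (hvert : ∀ e v, pos v ∈ A e → G.fst e = v ∨ G.snd e = v)
    (S : Finset E)
    (hX : ∀ g g', g ∉ S → g ≠ g' → ∀ z ∈ A g, z ∈ A g' → z ∈ Set.range pos)
    (f : E) (hf : f ∈ S) (hcard : S.card ≤ 2)
    (hpar : ∀ g ∈ S, (G.Incident (G.fst g) f) ∧ (G.Incident (G.snd g) f)) :
    ∃ u : Fin 5 → V, Nonempty (SDraw (G.starG S u)) ∧
      ∀ B : Finset V, (S ∩ G.cut B).card ≤ (univ.filter fun i => u i ∈ B).card := by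
  obtain ⟨p, hpA, hp1, hp2⟩ := (harc f).exists_interior
  have hp : p ∉ Set.range pos := by
    rintro ⟨v, rfl⟩
    rcases hvert f v hpA with h | h
    · exact hp1 (by rw [h])
    · exact hp2 (by rw [h])
  obtain ⟨B, C, hB, hC, hBA, hCA, hBC, hb, ha⟩ := (harc f).split hpA hp1 hp2
  set y1 := G.fst f with hy1
  set y2 := G.snd f with hy2
  obtain ⟨d, -⟩ := starG_draw hinj harc hvert S hX ![y1, y2] p ![B, C]
    (by
      intro i
      fin_cases i
      · exact hB.symm
      · exact hC)
    (by
      intro i v h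
      fin_cases i
      · rcases hvert f v (hBA h) with h' | h'
        · exact h'
        · exact absurd (show pos y2 ∈ B by rw [hy2, h']; exact h) hb
      · rcases hvert f v (hCA h) with h' | h'
        · exact absurd (show pos y1 ∈ C by rw [hy1, h']; exact h) ha
        · exact h')
    (by
      intro i
      fin_cases i
      · exact ⟨f, hf, hBA⟩
      · exact ⟨f, hf, hCA⟩)
    (by
      intro i j hij z hz hz'
      fin_cases i <;> fin_cases j
      · exact absurd rfl hij
      · exact Or.inl (hBC ⟨hz, hz'⟩)
      · exact Or.inl (hBC ⟨hz', hz⟩)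
      · exact absurd rfl hij)
    hp ⟨f, hf, hpA⟩
  obtain ⟨d1⟩ := d.double (Sum.inr 0) 1 (p := none) (y := some y1) rfl rfl (by simp)
  obtain ⟨d2⟩ := d1.double (Sum.inl (Sum.inr 1)) 2 (p := none) (y := some y2) rfl rfl (by simp)
  refine ⟨![y1, y1, y2, y2, y2], ?_, ?_⟩
  · refine d2.comap _ (Sum.elim (fun g => Sum.inl (Sum.inl (Sum.inl g)))
      ![Sum.inl (Sum.inl (Sum.inr 0)), Sum.inl (Sum.inr 0), Sum.inl (Sum.inl (Sum.inr 1)),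
        Sum.inr 0, Sum.inr 1]) ?_ ?_ ?_
    · rintro (g | i) (g' | j) h
      · simpa using h
      · fin_cases j <;> simp at h
      · fin_cases i <;> simp at h
      · fin_cases i <;> fin_cases j <;> first | rfl | simp at h
    · rintro (g | i)
      · rfl
      · fin_cases i <;> rfl
    · rintro (g | i)
      · rfl
      · fin_cases i <;> rfl
  · intro B
    by_cases hBy : y1 ∈ B ∨ y2 ∈ B
    · refine (Finset.card_le_card Finset.inter_subset_left).trans (hcard.trans ?_)
      rw [Finset.card_filter, Fin.sum_univ_five]
      rcases hBy with h | h
      · simp [h]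
        omega
      · simp [h]
    · have : S ∩ G.cut B = ∅ := by
        rw [Finset.eq_empty_iff_forall_notMem]
        intro g hg
        rw [mem_inter] at hg
        obtain ⟨h1, h2⟩ := hpar g hg.1
        have h3 := hg.2
        simp only [cut, mem_filter, mem_univ, true_and] at h3
        push Not at hBy
        apply h3
        rcases h1 with h1 | h1 <;> rcases h2 with h2 | h2 <;> rw [← h1, ← h2] <;>
          simp [← hy1, ← hy2, hBy.1, hBy.2]
      rw [this]
      simp

/-- The case of a genuine crossing. -/
theorem star_case_two {G : Multigraph V E} {pos : V → ℂ} {A : E → Set ℂ}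
    (hinj : Function.Injective pos)
    (harc : ∀ e, IsArc (A e) (pos (G.fst e)) (pos (G.snd e)))
    (hvert : ∀ e v, pos v ∈ A e → G.fst e = v ∨ G.snd e = v)
    (e f : E) (hef : e ≠ f)
    (hX : ∀ g g', g ∉ ({e, f} : Finset E) → g ≠ g' → ∀ z ∈ A g, z ∈ A g' → z ∈ Set.range pos)
    (c : ℂ) (hce : c ∈ A e) (hcf : c ∈ A f) (hcr : c ∉ Set.range pos)
    (y1 y2 : V) (hy : (G.fst f = y1 ∧ G.snd f = y2) ∨ (G.fst f = y2 ∧ G.snd f = y1))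
    (hy2 : ¬ G.Incident y2 e) :
    ∃ u : Fin 5 → V, Nonempty (SDraw (G.starG {e, f} u)) ∧
      ∀ B : Finset V, (({e, f} : Finset E) ∩ G.cut B).card ≤
        (univ.filter fun i => u i ∈ B).card := by
  have hAf : IsArc (A f) (pos y1) (pos y2) := by
    rcases hy with ⟨rfl, rfl⟩ | ⟨rfl, rfl⟩
    · exact harc f
    · exact (harc f).symm
  have hvf : ∀ v, pos v ∈ A f → v = y1 ∨ v = y2 := by
    intro v hv
    have := hvert f v hv
    rcases hy with ⟨rfl, rfl⟩ | ⟨rfl, rfl⟩ <;> tauto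
  have hy2e : pos y2 ∉ A e := fun h => hy2 (hvert e y2 h)
  have hnr : ∀ v, c ≠ pos v := fun v h => hcr ⟨v, h.symm⟩
  obtain ⟨-, C, -, hC, -, hCA, -, -, hy1C⟩ := hAf.split hcf (hnr y1) (hnr y2)
  obtain ⟨q, L2, hqC, hqe, hL2, hL2C, hL2e, -, -⟩ :=
    hC.exit (harc e).isCompact.isClosed ⟨c, hC.left_mem, hce⟩ hy2e
  have hqf : q ∈ A f := hCA hqC
  have hq : q ∉ Set.range pos := by
    rintro ⟨v, rfl⟩
    rcases hvf v hqf with rfl | rfl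
    · exact hy1C hqC
    · exact hy2e hqe
  have hqv : ∀ v, q ≠ pos v := fun v h => hq ⟨v, h.symm⟩
  obtain ⟨L0, L1, hL0, hL1, hL0e, hL1e, hL01, hx2, hx1⟩ := (harc e).split hqe (hqv _) (hqv _)
  obtain ⟨σ, -, hσ, -, hσf, -, -, hσy2, -⟩ := hAf.split hqf (hqv _) (hqv _)
  set x1 := G.fst e with hx1def
  set x2 := G.snd e with hx2def
  obtain ⟨d, hd0, hdv, hdA⟩ := starG_draw hinj harc hvert {e, f} hX ![x1, x2, y2] q ![L0, L1, L2]
    (by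
      intro i
      fin_cases i
      · exact hL0.symm
      · exact hL1
      · exact hL2)
    (by
      intro i v h
      fin_cases i
      · rcases hvert e v (hL0e h) with h' | h'
        · exact h'
        · exact absurd (show pos x2 ∈ L0 by rw [hx2def, h']; exact h) hx2
      · rcases hvert e v (hL1e h) with h' | h'
        · exact absurd (show pos x1 ∈ L1 by rw [hx1def, h']; exact h) hx1
        · exact h'
      · rcases hvf v (hCA (hL2C h)) with h' | h'
        · exact absurd (h' ▸ (hL2C h)) hy1C
        · exact h'.symm)
    (by
      intro i
      fin_cases i
      · exact ⟨e, by simp, hL0e⟩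
      · exact ⟨e, by simp, hL1e⟩
      · exact ⟨f, by simp, hL2C.trans hCA⟩)
    (by
      intro i j hij z hz hz'
      fin_cases i <;> fin_cases j
      · exact absurd rfl hij
      · exact Or.inl (hL01 ⟨hz, hz'⟩)
      · exact Or.inl (hL2e z hz' (hL0e hz))
      · exact Or.inl (hL01 ⟨hz', hz⟩)
      · exact absurd rfl hij
      · exact Or.inl (hL2e z hz' (hL1e hz))
      · exact Or.inl (hL2e z hz (hL0e hz'))
      · exact Or.inl (hL2e z hz (hL1e hz'))
      · exact absurd rfl hij)
    hq ⟨e, by simp, hqe⟩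
  obtain ⟨d1⟩ := d.addE none (some y1) (by simp) 2 σ (by rw [hd0, hdv]; exact hσ.symm)
    (by
      rintro (_ | v) h1 h2 hm
      · exact h1 rfl
      · rw [hdv] at hm
        rcases hvf v (hσf hm) with rfl | rfl
        · exact h2 rfl
        · exact hσy2 hm)
    (by
      rintro (g | i) hg z hz hz'
      · rw [hdA] at hz'
        obtain ⟨v, rfl⟩ := hX g f g.2 (by
          intro h
          exact g.2 (by simp [h])) z hz' (hσf hz)
        rw [hdv]
        rcases hvf v (hσf hz) with rfl | rfl
        · rfl
        · exact absurd hz hσy2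
      · exact absurd (Or.inl rfl) hg)
  refine ⟨![x1, x2, y2, y1, y1], ?_, ?_⟩
  · refine d1.comap _ (Sum.elim (fun g => Sum.inl (Sum.inl g))
      ![Sum.inl (Sum.inr 0), Sum.inl (Sum.inr 1), Sum.inl (Sum.inr 2),
        Sum.inr 0, Sum.inr 1]) ?_ ?_ ?_
    · rintro (g | i) (g' | j) h
      · simpa using h
      · fin_cases j <;> simp at h
      · fin_cases i <;> simp at h
      · fin_cases i <;> fin_cases j <;> first | rfl | simp at h
    · rintro (g | i)
      · rfl
      · fin_cases i <;> rfl
    · rintro (g | i)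
      · rfl
      · fin_cases i <;> rfl
  · intro B
    have h1 : (({e, f} : Finset E) ∩ G.cut B).card =
        (if e ∈ G.cut B then 1 else 0) + (if f ∈ G.cut B then 1 else 0) := by
      rw [← Finset.filter_mem_eq_inter, Finset.card_filter, Finset.sum_pair hef]
    have h2 : f ∈ G.cut B ↔ ¬ (y1 ∈ B ↔ y2 ∈ B) := by
      simp only [cut, mem_filter, mem_univ, true_and]
      rcases hy with ⟨h, h'⟩ | ⟨h, h'⟩ <;> rw [h, h'] <;> tauto
    have h3 : e ∈ G.cut B ↔ ¬ (x1 ∈ B ↔ x2 ∈ B) := by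
      simp only [cut, mem_filter, mem_univ, true_and, ← hx1def, ← hx2def]
    rw [h1, Finset.card_filter, Fin.sum_univ_five]
    simp only [h2, h3]
    by_cases k1 : x1 ∈ B <;> by_cases k2 : x2 ∈ B <;> by_cases k3 : y1 ∈ B <;>
      by_cases k4 : y2 ∈ B <;> simp [k1, k2, k3, k4]

/-- If every 5-edge-connected planar graph is `ℤ₃`-extendable at every vertex
of degree 5, then every 5-edge-connected graph with crossing number at most
one is `ℤ₃`-connected. -/
theorem stmt_16
    (hyp : ∀ (V E : Type) [Fintype V] [DecidableEq V] [Fintype E] [DecidableEq E] (G : Multigraph V E) (x : V),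
      G.Planar → G.EdgeConnected 5 → G.degree x = 5 → G.Z3ExtendableAt x)
    {V E : Type} [Fintype V] [DecidableEq V] [Fintype E] [DecidableEq E] (G : Multigraph V E)
    (hcr : G.CrossingNumberLE1) (h5 : G.EdgeConnected 5) :
    G.Z3Connected := by
  have fin : ∀ S : Finset E, (∃ u : Fin 5 → V, Nonempty (SDraw (G.starG S u)) ∧
      ∀ B : Finset V, (S ∩ G.cut B).card ≤ (univ.filter fun i => u i ∈ B).card) →
      G.Z3Connected := by
    rintro S ⟨u, ⟨d⟩, hS⟩
    exact G.starG_orient S u (hyp _ _ (G.starG S u) none d.planar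
      (G.starG_connected S u h5 hS) (G.starG_degree S u))
  obtain ⟨d, hd⟩ := hcr
  obtain ⟨pos, A, hinj, harc, hvert, hcross⟩ := d.toSets
  by_cases hc : ∃ e f, e ≠ f ∧ ∃ c ∈ A e, c ∈ A f ∧ c ∉ Set.range pos
  · obtain ⟨e, f, hef, c, hce, hcf, hcr⟩ := hc
    have hcre := hcross e f hef ⟨c, hce, hcf, hcr⟩
    have hX : ∀ g g', g ∉ ({e, f} : Finset E) → g ≠ g' → ∀ z ∈ A g, z ∈ A g' →
        z ∈ Set.range pos := by
      intro g g' hg hgg z hz hz'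
      by_contra hn
      have hm := hcross g g' hgg ⟨z, hz, hz', hn⟩
      apply hg
      rcases hd _ hm _ hcre with h | h
      · have h' : g = e := (Prod.ext_iff.1 h).1
        simp [h']
      · have h' : g = f := (Prod.ext_iff.1 h).1
        simp [h']
    by_cases h1 : G.Incident (G.fst f) e
    · by_cases h2 : G.Incident (G.snd f) e
      · refine fin {e, f} (star_case_one hinj harc hvert {e, f} hX e (by simp)
          Finset.card_le_two ?_)
        intro g hg
        rw [mem_insert, mem_singleton] at hg
        rcases hg with rfl | rfl
        · exact ⟨Or.inl rfl, Or.inr rfl⟩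
        · exact ⟨h1, h2⟩
      · exact fin {e, f} (star_case_two hinj harc hvert e f hef hX c hce hcf hcr
          (G.fst f) (G.snd f) (Or.inl ⟨rfl, rfl⟩) h2)
    · exact fin {e, f} (star_case_two hinj harc hvert e f hef hX c hce hcf hcr
          (G.snd f) (G.fst f) (Or.inr ⟨rfl, rfl⟩) h1)
  · have hX : ∀ g g', g ≠ g' → ∀ z ∈ A g, z ∈ A g' → z ∈ Set.range pos := by
      intro g g' hgg z hz hz'
      by_contra hn
      exact hc ⟨g, g', hgg, z, hz, hz', hn⟩
    by_cases hE : Nonempty E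
    · obtain ⟨f⟩ := hE
      refine fin {f} (star_case_one hinj harc hvert {f} (fun g g' _ => hX g g') f (by simp)
        (by simp) ?_)
      intro g hg
      rw [mem_singleton] at hg
      subst hg
      exact ⟨Or.inl rfl, Or.inr rfl⟩
    · have hE' : IsEmpty E := not_nonempty_iff.1 hE
      intro β hβ
      refine ⟨fun _ => true, fun v => ?_⟩
      have hu : ({v} : Finset V) = univ := by
        by_contra hne
        have := h5 {v} (by simp) hne
        have h0 : (G.cut {v}).card = 0 := by
          rw [Finset.card_eq_zero]
          exact Finset.eq_empty_of_isEmpty _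
        omega
      unfold IsBoundary at hβ
      rw [← hu, Finset.sum_singleton] at hβ
      rw [hβ, net_eq]
      simp

end Multigraph
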